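/- Fix Ω₀ > 4/√π and set Ω(ε) = Ω₀/ε and R₀ = √(1 − 4/(√π Ω₀)). There exist a constant C = C(Ω₀) and ε₀ > 0 such that for all 0 < ε < ε₀ and every GP minimizer Ψ of E^GP_{ε,Ω(ε)}, the L⁴ mass of Ψ inside the Thomas–Fermi hole satisfies ∫_{{|x| < R₀}} |Ψ(x)|⁴ dx ≤ C ε|log ε|. -/

import Mathlib

open MeasureTheory Real Filter

noncomputable section

/-- Points of the plane. -/
abbrev Pt : Type := EuclideanSpace ℝ (Fin 2)

/-- The open unit disc. -/
def B1 : Set Pt := Metric.ball 0 1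

/-- First partial derivative of a complex-valued function. -/
def pd1 (Ψ : Pt → ℂ) (x : Pt) : ℂ := fderiv ℝ Ψ x (EuclideanSpace.single 0 1)

/-- Second partial derivative of a complex-valued function. -/
def pd2 (Ψ : Pt → ℂ) (x : Pt) : ℂ := fderiv ℝ Ψ x (EuclideanSpace.single 1 1)

/-- Angular momentum operator `L = -i (x₁ ∂₂ - x₂ ∂₁)`. -/
def angMom (Ψ : Pt → ℂ) (x : Pt) : ℂ :=
  -Complex.I * ((x 0 : ℂ) * pd2 Ψ x - (x 1 : ℂ) * pd1 Ψ x)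

/-- The Gross-Pitaevskii energy density `|∇Ψ|² - Ω conj(Ψ) LΨ + |Ψ|⁴/ε²`. -/
def gpDensity (ε Ω : ℝ) (Ψ : Pt → ℂ) (x : Pt) : ℝ :=
  ‖pd1 Ψ x‖ ^ 2 + ‖pd2 Ψ x‖ ^ 2
    - Ω * (starRingEnd ℂ (Ψ x) * angMom Ψ x).re
    + ‖Ψ x‖ ^ 4 / ε ^ 2

/-- The Gross-Pitaevskii functional on the unit disc. -/
def gpEnergy (ε Ω : ℝ) (Ψ : Pt → ℂ) : ℝ := ∫ x in B1, gpDensity ε Ω Ψ x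

/-- Admissible (H¹, normalized) wave functions. -/
def gpAdm (Ψ : Pt → ℂ) : Prop :=
  DifferentiableOn ℝ Ψ B1 ∧
  IntegrableOn (fun x => ‖Ψ x‖ ^ 2) B1 ∧
  IntegrableOn (fun x => ‖pd1 Ψ x‖ ^ 2 + ‖pd2 Ψ x‖ ^ 2) B1 ∧
  IntegrableOn (fun x => ‖Ψ x‖ ^ 4) B1 ∧
  IntegrableOn (fun x => (starRingEnd ℂ (Ψ x) * angMom Ψ x).re) B1 ∧
  (∫ x in B1, ‖Ψ x‖ ^ 2) = 1

/-- The GP ground-state energy: infimum of the functional over normalized functions. -/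
def gpGround (ε Ω : ℝ) : ℝ := sInf {E | ∃ Ψ : Pt → ℂ, gpAdm Ψ ∧ E = gpEnergy ε Ω Ψ}

/-- A GP minimizer: a normalized admissible function attaining the infimum. -/
def IsGPMinimizer (ε Ω : ℝ) (Ψ : Pt → ℂ) : Prop :=
  gpAdm Ψ ∧ gpEnergy ε Ω Ψ = gpGround ε Ω

/-- The Thomas-Fermi functional. -/
def tfEnergy (Ω₀ : ℝ) (ρ : Pt → ℝ) : ℝ :=
  ∫ x in B1, ((ρ x) ^ 2 - Ω₀ ^ 2 * ‖x‖ ^ 2 * ρ x / 4)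

/-- Admissible TF densities: nonnegative, in L²(B₁), of total mass one. -/
def tfAdm (ρ : Pt → ℝ) : Prop :=
  IntegrableOn ρ B1 ∧ IntegrableOn (fun x => (ρ x) ^ 2) B1 ∧
  (∀ᵐ x ∂(volume.restrict B1), 0 ≤ ρ x) ∧ (∫ x in B1, ρ x) = 1

/-- The TF ground-state energy. -/
def tfGround (Ω₀ : ℝ) : ℝ := sInf {E | ∃ ρ : Pt → ℝ, tfAdm ρ ∧ E = tfEnergy Ω₀ ρ}

/-- Radius of the TF "hole". -/
def R0 (Ω₀ : ℝ) : ℝ := Real.sqrt (1 - 4 / (Real.sqrt π * Ω₀))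

/-- The TF minimizer. -/
def rhoTF (Ω₀ : ℝ) (x : Pt) : ℝ :=
  if Ω₀ ≤ 4 / Real.sqrt π then 1 / π - Ω₀ ^ 2 / 16 * (1 - 2 * ‖x‖ ^ 2)
  else max 0 (Ω₀ ^ 2 / 8 * (‖x‖ ^ 2 - 1) + Ω₀ / (2 * Real.sqrt π))

/-!
With `A = (Ω / 2) (-x₂, x₁)` and `Ω = Ω₀ / ε`, completing the square turns `ε² E[Ψ]` into
`ε² ∫ |(∇ - iA)Ψ|²` plus the Thomas-Fermi energy of `|Ψ|²`. The Thomas-Fermi functional is strongly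
convex, so the excess of `ε² E[Ψ]` over its minimum controls `∫ (|Ψ|² - ρ^TF)²`, which dominates the
`L⁴` mass in the hole because `ρ^TF` vanishes there. It remains to exhibit a competitor whose excess
is `O(ε |log ε|)`: the Thomas-Fermi amplitude carrying a square lattice of vortices with spacing of
order `√ε`, whose winding compensates the field of `A`. In lattice units the cores are smoothed out
where the squared modulus of the vortex function is of order `ε`, and the logarithm is that of
`∬ (ε + cos² πs + cos² πt)⁻¹` over a period.
-/

open scoped Topology ComplexConjugate

section Disc

lemma measurableSet_B1 : MeasurableSet B1 := measurableSet_ball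

instance : IsFiniteMeasure (volume.restrict B1) :=
  isFiniteMeasure_restrict.2 measure_ball_lt_top.ne

lemma volume_real_B1 : volume.real B1 = π := by
  simp [B1, Measure.real, EuclideanSpace.volume_ball_fin_two, pi_pos.le]

lemma integrableOn_B1_of_continuous {E : Type*} [NormedAddCommGroup E] {g : Pt → E}
    (hg : Continuous g) : IntegrableOn g B1 :=
  (hg.continuousOn.integrableOn_compact (isCompact_closedBall 0 1)).mono_set
    Metric.ball_subset_closedBall

lemma norm_sq_eq_coord (x : Pt) : ‖x‖ ^ 2 = x 0 ^ 2 + x 1 ^ 2 := by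
  simp [EuclideanSpace.norm_sq_eq]

lemma norm_sq_lt_one_of_mem_B1 {x : Pt} (hx : x ∈ B1) : ‖x‖ ^ 2 < 1 :=
  pow_lt_one₀ (norm_nonneg x) (mem_ball_zero_iff.1 hx) two_ne_zero

lemma abs_coord_lt_one_of_mem_B1 {x : Pt} (hx : x ∈ B1) (i : Fin 2) : |x i| < 1 :=
  (PiLp.norm_apply_le x i).trans_lt (mem_ball_zero_iff.1 hx)

lemma integral_B1_fun_norm (f : ℝ → ℝ) :
    ∫ x in B1, f ‖x‖ = 2 * π * ∫ r in (0 : ℝ)..1, r * f r := by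
  have hindicator : ∀ x : Pt, B1.indicator (fun x ↦ f ‖x‖) x =
      (fun r ↦ (Set.Iio 1).indicator f r) ‖x‖ := fun x ↦ by
    classical simp only [Set.indicator_apply, B1, mem_ball_zero_iff, Set.mem_Iio]
  have hradial : ∀ r : ℝ, r ^ (Module.finrank ℝ Pt - 1) • (Set.Iio 1).indicator f r =
      (Set.Iio 1).indicator (fun r ↦ r * f r) r := fun r ↦ by
    simp [Set.indicator_apply]
  rw [← integral_indicator measurableSet_B1, integral_congr_ae (.of_forall hindicator),
    integral_fun_norm_addHaar volume (fun r ↦ (Set.Iio 1).indicator f r)]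
  simp only [hradial]
  rw [setIntegral_indicator measurableSet_Iio, Set.Ioi_inter_Iio,
    intervalIntegral.integral_of_le zero_le_one, integral_Ioc_eq_integral_Ioo,
    ← B1, volume_real_B1]
  simp [mul_assoc]

end Disc

section ThomasFermi

/-- The Thomas-Fermi density before truncation: when there is a hole, `rhoTF` is its positive
part. -/
def tfProfile (Ω₀ : ℝ) (x : Pt) : ℝ :=
  Ω₀ ^ 2 / 8 * (‖x‖ ^ 2 - 1) + Ω₀ / (2 * √π)

lemma integral_sq_sub_le_of_eq_posPart {α : Type*} [MeasurableSpace α] {μ : Measure α}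
    [IsFiniteMeasure μ] {V ρ τ : α → ℝ} {c : ℝ} (hV : MemLp V 2 μ) (hρ : MemLp ρ 2 μ)
    (hρ₀ : 0 ≤ᵐ[μ] ρ) (hτ : ∀ x, τ x = max (V x - c) 0) (hmass : ∫ x, ρ x ∂μ = ∫ x, τ x ∂μ) :
    ∫ x, (ρ x - τ x) ^ 2 ∂μ ≤
      (∫ x, (ρ x ^ 2 - 2 * V x * ρ x) ∂μ) - ∫ x, (τ x ^ 2 - 2 * V x * τ x) ∂μ := by
  have hτ₂ : MemLp τ 2 μ := by
    rw [funext hτ]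
    exact (hV.sub (memLp_const c)).pos_part
  have integrable_density {σ : α → ℝ} (hσ : MemLp σ 2 μ) :
      Integrable (fun x ↦ σ x ^ 2 - 2 * V x * σ x) μ :=
    hσ.integrable_sq.sub ((hV.const_mul 2).integrable_mul hσ)
  have hdiff : Integrable
      (fun x ↦ (ρ x ^ 2 - 2 * V x * ρ x) - (τ x ^ 2 - 2 * V x * τ x)) μ :=
    (integrable_density hρ).sub (integrable_density hτ₂)
  have hmultiplier : Integrable (fun x ↦ 2 * c * (ρ x - τ x)) μ :=
    ((hρ.sub hτ₂).integrable one_le_two).const_mul _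
  have hmultiplier₀ : ∫ x, 2 * c * (ρ x - τ x) ∂μ = 0 := by
    rw [integral_const_mul, integral_sub (hρ.integrable one_le_two) (hτ₂.integrable one_le_two),
      hmass, sub_self, mul_zero]
  have hpointwise : ∀ᵐ x ∂μ, (ρ x - τ x) ^ 2 ≤
      ((ρ x ^ 2 - 2 * V x * ρ x) - (τ x ^ 2 - 2 * V x * τ x)) + 2 * c * (ρ x - τ x) := by
    filter_upwards [hρ₀] with x hx
    rw [Pi.zero_apply] at hx
    rcases le_total (V x - c) 0 with hneg | hpos
    · rw [hτ, max_eq_right hneg]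
      nlinarith
    · rw [hτ, max_eq_left hpos]
      nlinarith
  calc ∫ x, (ρ x - τ x) ^ 2 ∂μ
      ≤ ∫ x, (((ρ x ^ 2 - 2 * V x * ρ x) - (τ x ^ 2 - 2 * V x * τ x))
          + 2 * c * (ρ x - τ x)) ∂μ :=
        integral_mono_ae (hρ.sub hτ₂).integrable_sq (hdiff.add hmultiplier) hpointwise
    _ = ∫ x, ((ρ x ^ 2 - 2 * V x * ρ x) - (τ x ^ 2 - 2 * V x * τ x)) ∂μ := by
        rw [integral_add hdiff hmultiplier, hmultiplier₀, add_zero]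
    _ = _ := integral_sub (integrable_density hρ) (integrable_density hτ₂)

lemma hasDerivAt_max_zero_sq (t : ℝ) : HasDerivAt (fun t : ℝ ↦ max 0 t ^ 2) (2 * max 0 t) t := by
  rcases lt_trichotomy t 0 with ht | rfl | ht
  · refine ((hasDerivAt_const t (0 : ℝ)).congr_of_eventuallyEq ?_).congr_deriv
      (by rw [max_eq_left ht.le, mul_zero])
    filter_upwards [Iio_mem_nhds ht] with s hs
    rw [max_eq_left (le_of_lt hs), zero_pow two_ne_zero]
  · have hquad : (fun s : ℝ ↦ max 0 s ^ 2) =O[𝓝 0] fun s ↦ ‖s - 0‖ ^ 2 := by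
      refine Asymptotics.IsBigO.of_bound 1 (.of_forall fun s ↦ ?_)
      rw [sub_zero, norm_pow, norm_pow, norm_norm, one_mul]
      gcongr
      rw [norm_eq_abs, abs_of_nonneg (le_max_left 0 s)]
      exact max_le (abs_nonneg s) (le_abs_self s)
    simpa [hasDerivAt_iff_hasFDerivAt] using hquad.hasFDerivAt one_lt_two
  · refine ((hasDerivAt_pow 2 t).congr_of_eventuallyEq ?_).congr_deriv
      (by rw [max_eq_right ht.le]; norm_num)
    filter_upwards [Ioi_mem_nhds ht] with s hs
    rw [max_eq_right (le_of_lt hs)]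

variable {Ω₀ : ℝ}

lemma continuous_tfProfile : Continuous (tfProfile Ω₀) := by
  unfold tfProfile
  fun_prop

lemma rhoTF_eq_max (h : 4 / √π < Ω₀) (x : Pt) : rhoTF Ω₀ x = max 0 (tfProfile Ω₀ x) :=
  if_neg h.not_ge

lemma rhoTF_nonneg (h : 4 / √π < Ω₀) (x : Pt) : 0 ≤ rhoTF Ω₀ x := by
  rw [rhoTF_eq_max h]
  exact le_max_left _ _

lemma continuous_rhoTF (h : 4 / √π < Ω₀) : Continuous (rhoTF Ω₀) := by
  rw [funext (rhoTF_eq_max h)]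
  exact continuous_const.max continuous_tfProfile

lemma pos_of_hole (h : 4 / √π < Ω₀) : 0 < Ω₀ := lt_trans (by positivity) h

lemma integral_rhoTF (h : 4 / √π < Ω₀) : ∫ x in B1, rhoTF Ω₀ x = 1 := by
  have hΩ₀ := pos_of_hole h
  have hπ := Real.sq_sqrt pi_pos.le
  let v : ℝ → ℝ := fun r ↦ Ω₀ ^ 2 / 8 * (r ^ 2 - 1) + Ω₀ / (2 * √π)
  have hv (r : ℝ) : HasDerivAt v (Ω₀ ^ 2 / 4 * r) r :=
    ((((hasDerivAt_pow 2 r).sub_const 1).const_mul (Ω₀ ^ 2 / 8)).add_const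
      (Ω₀ / (2 * √π))).congr_deriv (by push_cast; ring)
  have hderiv (r : ℝ) : HasDerivAt (fun r ↦ 2 / Ω₀ ^ 2 * max 0 (v r) ^ 2) (r * max 0 (v r)) r :=
    (((hasDerivAt_max_zero_sq (v r)).comp r (hv r)).const_mul (2 / Ω₀ ^ 2)).congr_deriv
      (by field_simp; ring)
  have hv₀ : v 0 ≤ 0 := by
    have hmass : Ω₀ / (2 * √π) = Ω₀ / 8 * (4 / √π) := by
      field_simp
      norm_num
    have hhole : Ω₀ / 8 * (4 / √π) ≤ Ω₀ / 8 * Ω₀ := by gcongr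
    simp only [v]
    linarith
  have hv₁ : v 1 = Ω₀ / (2 * √π) := by simp [v]
  calc ∫ x in B1, rhoTF Ω₀ x = ∫ x : Pt in B1, (fun r ↦ max 0 (v r)) ‖x‖ := by
        simp only [rhoTF_eq_max h, tfProfile, v]
    _ = 2 * π * ∫ r in (0 : ℝ)..1, r * max 0 (v r) := integral_B1_fun_norm fun r ↦ max 0 (v r)
    _ = 2 * π * (2 / Ω₀ ^ 2 * (Ω₀ / (2 * √π)) ^ 2) := by
        rw [intervalIntegral.integral_eq_sub_of_hasDerivAt (fun r _ ↦ hderiv r)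
          (Continuous.intervalIntegrable (by fun_prop) 0 1), max_eq_left hv₀, hv₁,
          max_eq_right (by positivity)]
        ring
    _ = 1 := by
        field_simp
        linarith

lemma tfAdm.memLp_two {ρ : Pt → ℝ} (hρ : tfAdm ρ) : MemLp ρ 2 (volume.restrict B1) :=
  (memLp_two_iff_integrable_sq hρ.1.aestronglyMeasurable).2 hρ.2.1

lemma integral_sq_sub_rhoTF_le (h : 4 / √π < Ω₀) {ρ : Pt → ℝ} (hρ : tfAdm ρ) :
    ∫ x in B1, (ρ x - rhoTF Ω₀ x) ^ 2 ≤ tfEnergy Ω₀ ρ - tfEnergy Ω₀ (rhoTF Ω₀) := by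
  have hV : MemLp (fun x : Pt ↦ Ω₀ ^ 2 / 8 * ‖x‖ ^ 2) 2 (volume.restrict B1) :=
    (memLp_two_iff_integrable_sq (by fun_prop)).2 (integrableOn_B1_of_continuous (by fun_prop))
  refine (integral_sq_sub_le_of_eq_posPart (c := Ω₀ ^ 2 / 8 - Ω₀ / (2 * √π)) hV hρ.memLp_two
    hρ.2.2.1 (fun x ↦ ?_) (hρ.2.2.2.trans (integral_rhoTF h).symm)).trans_eq ?_
  · rw [rhoTF_eq_max h, max_comm, tfProfile]
    ring_nf
  · unfold tfEnergy
    congr! 4 <;> ring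

lemma R0_le_one (h : 4 / √π < Ω₀) : R0 Ω₀ ≤ 1 := by
  have hΩ₀ := pos_of_hole h
  exact Real.sqrt_le_one.2 (sub_le_self 1 (by positivity))

lemma rhoTF_eq_zero_of_norm_lt_R0 (h : 4 / √π < Ω₀) {x : Pt} (hx : ‖x‖ < R0 Ω₀) :
    rhoTF Ω₀ x = 0 := by
  have hΩ₀ := pos_of_hole h
  have hx₂ : ‖x‖ ^ 2 < 1 - 4 / (√π * Ω₀) := (Real.lt_sqrt (norm_nonneg x)).1 hx
  rw [rhoTF_eq_max h, max_eq_left]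
  calc tfProfile Ω₀ x ≤ Ω₀ ^ 2 / 8 * ((1 - 4 / (√π * Ω₀)) - 1) + Ω₀ / (2 * √π) := by
        unfold tfProfile
        gcongr
    _ = 0 := by
        field_simp
        ring

lemma integral_hole_sq_le (h : 4 / √π < Ω₀) {ρ : Pt → ℝ} (hρ : tfAdm ρ) :
    ∫ x in Metric.ball 0 (R0 Ω₀), ρ x ^ 2 ≤ tfEnergy Ω₀ ρ - tfEnergy Ω₀ (rhoTF Ω₀) := by
  have hint : IntegrableOn (fun x ↦ (ρ x - rhoTF Ω₀ x) ^ 2) B1 := by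
    have hTF : MemLp (rhoTF Ω₀) 2 (volume.restrict B1) :=
      (memLp_two_iff_integrable_sq (continuous_rhoTF h).aestronglyMeasurable).2
        (integrableOn_B1_of_continuous ((continuous_rhoTF h).pow 2))
    exact (hρ.memLp_two.sub hTF).integrable_sq
  calc ∫ x in Metric.ball 0 (R0 Ω₀), ρ x ^ 2
      = ∫ x in Metric.ball 0 (R0 Ω₀), (ρ x - rhoTF Ω₀ x) ^ 2 :=
        setIntegral_congr_fun measurableSet_ball fun x hx ↦ by
          simp only [rhoTF_eq_zero_of_norm_lt_R0 h (mem_ball_zero_iff.1 hx), sub_zero]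
    _ ≤ ∫ x in B1, (ρ x - rhoTF Ω₀ x) ^ 2 :=
        setIntegral_mono_set hint (.of_forall fun x ↦ sq_nonneg _)
          (Metric.ball_subset_ball (R0_le_one h)).eventuallyLE
    _ ≤ _ := integral_sq_sub_rhoTF_le h hρ

lemma tfEnergy_sub_le {ρ τ : Pt → ℝ} {M : ℝ} (hρ : Continuous ρ) (hτ : Continuous τ)
    (hρM : ∀ x ∈ B1, ρ x ∈ Set.Icc 0 M) (hτM : ∀ x ∈ B1, τ x ∈ Set.Icc 0 M) :
    tfEnergy Ω₀ ρ - tfEnergy Ω₀ τ ≤ (2 * M + Ω₀ ^ 2 / 4) * ∫ x in B1, |ρ x - τ x| := by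
  unfold tfEnergy
  rw [← integral_sub (integrableOn_B1_of_continuous (by fun_prop))
    (integrableOn_B1_of_continuous (by fun_prop)), ← integral_const_mul]
  refine setIntegral_mono_on (integrableOn_B1_of_continuous (by fun_prop))
    (integrableOn_B1_of_continuous (by fun_prop)) measurableSet_B1 fun x hx ↦ ?_
  have hfactor : |ρ x + τ x - Ω₀ ^ 2 / 4 * ‖x‖ ^ 2| ≤ 2 * M + Ω₀ ^ 2 / 4 := by
    have hx₂ : Ω₀ ^ 2 / 4 * ‖x‖ ^ 2 ≤ Ω₀ ^ 2 / 4 :=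
      mul_le_of_le_one_right (by positivity) (norm_sq_lt_one_of_mem_B1 hx).le
    have hx₀ : 0 ≤ Ω₀ ^ 2 / 4 * ‖x‖ ^ 2 := by positivity
    obtain ⟨hρ₀, hρ₁⟩ := hρM x hx
    obtain ⟨hτ₀, hτ₁⟩ := hτM x hx
    rw [abs_le]
    constructor <;> nlinarith
  calc ρ x ^ 2 - Ω₀ ^ 2 * ‖x‖ ^ 2 * ρ x / 4 - (τ x ^ 2 - Ω₀ ^ 2 * ‖x‖ ^ 2 * τ x / 4)
      = (ρ x + τ x - Ω₀ ^ 2 / 4 * ‖x‖ ^ 2) * (ρ x - τ x) := by ring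
    _ ≤ |ρ x + τ x - Ω₀ ^ 2 / 4 * ‖x‖ ^ 2| * |ρ x - τ x| :=
        (le_abs_self _).trans (abs_mul _ _).le
    _ ≤ _ := by gcongr

end ThomasFermi

section GrossPitaevskii

/-- The squared magnetic gradient `|(∇ - iA)Ψ|²` for the vector potential `A = (Ω / 2) (-x₂, x₁)` of
solid-body rotation with angular velocity `Ω`. -/
def magneticGradSq (Ω : ℝ) (Ψ : Pt → ℂ) (x : Pt) : ℝ :=
  ‖pd1 Ψ x - ((-(Ω / 2) * x 1 : ℝ) : ℂ) * Complex.I * Ψ x‖ ^ 2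
    + ‖pd2 Ψ x - ((Ω / 2 * x 0 : ℝ) : ℂ) * Complex.I * Ψ x‖ ^ 2

variable {ε Ω Ω₀ : ℝ} {Ψ : Pt → ℂ}

lemma magneticGradSq_nonneg (Ω : ℝ) (Ψ : Pt → ℂ) (x : Pt) : 0 ≤ magneticGradSq Ω Ψ x := by
  unfold magneticGradSq
  positivity

lemma magneticGradSq_const_mul (hΨ : Differentiable ℝ Ψ) (c : ℂ) (x : Pt) :
    magneticGradSq Ω (fun x ↦ c * Ψ x) x = ‖c‖ ^ 2 * magneticGradSq Ω Ψ x := by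
  have hfderiv : fderiv ℝ (fun x ↦ c * Ψ x) x = c • fderiv ℝ Ψ x :=
    fderiv_const_mul (hΨ x) c
  simp only [magneticGradSq, pd1, pd2, hfderiv, smul_apply, smul_eq_mul,
    mul_left_comm _ c, ← mul_sub, norm_mul, mul_pow, mul_add]

lemma gpDensity_eq_magneticGradSq_add (ε Ω : ℝ) (Ψ : Pt → ℂ) (x : Pt) :
    gpDensity ε Ω Ψ x =
      magneticGradSq Ω Ψ x + (‖Ψ x‖ ^ 4 / ε ^ 2 - Ω ^ 2 / 4 * ‖x‖ ^ 2 * ‖Ψ x‖ ^ 2) := by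
  have hquartic : ‖Ψ x‖ ^ 4 = (‖Ψ x‖ ^ 2) ^ 2 := by ring
  rw [norm_sq_eq_coord, gpDensity, magneticGradSq, angMom, hquartic]
  simp only [← Complex.normSq_eq_norm_sq, Complex.normSq_apply]
  simp
  ring

lemma gpAdm.integrableOn_gpDensity (hΨ : gpAdm Ψ) : IntegrableOn (gpDensity ε Ω Ψ) B1 := by
  obtain ⟨-, -, hgrad, hquartic, hrot, -⟩ := hΨ
  exact (hgrad.sub (hrot.const_mul Ω)).add (hquartic.div_const _)

lemma gpAdm.tfAdm_norm_sq (hΨ : gpAdm Ψ) : tfAdm fun x ↦ ‖Ψ x‖ ^ 2 := by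
  obtain ⟨-, hsq, -, hquartic, -, hmass⟩ := hΨ
  exact ⟨hsq, by simpa only [← pow_mul] using hquartic, .of_forall fun x ↦ sq_nonneg _, hmass⟩

lemma tfAdm.integrableOn_tfDensity {ρ : Pt → ℝ} (hρ : tfAdm ρ) :
    IntegrableOn (fun x ↦ ρ x ^ 2 - Ω₀ ^ 2 * ‖x‖ ^ 2 * ρ x / 4) B1 := by
  have hpot : MemLp (fun x : Pt ↦ Ω₀ ^ 2 * ‖x‖ ^ 2) 2 (volume.restrict B1) :=
    (memLp_two_iff_integrable_sq (by fun_prop)).2 (integrableOn_B1_of_continuous (by fun_prop))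
  exact hρ.2.1.sub ((hpot.integrable_mul hρ.memLp_two).div_const 4)

lemma gpAdm.sq_mul_gpEnergy_eq (hε : ε ≠ 0) (hΨ : gpAdm Ψ) :
    ε ^ 2 * gpEnergy ε (Ω₀ / ε) Ψ =
      ε ^ 2 * (∫ x in B1, magneticGradSq (Ω₀ / ε) Ψ x) + tfEnergy Ω₀ fun x ↦ ‖Ψ x‖ ^ 2 := by
  have htf := hΨ.tfAdm_norm_sq.integrableOn_tfDensity (Ω₀ := Ω₀)
  have hsplit (x : Pt) : ε ^ 2 * magneticGradSq (Ω₀ / ε) Ψ x =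
      ε ^ 2 * gpDensity ε (Ω₀ / ε) Ψ x
        - ((‖Ψ x‖ ^ 2) ^ 2 - Ω₀ ^ 2 * ‖x‖ ^ 2 * ‖Ψ x‖ ^ 2 / 4) := by
    rw [gpDensity_eq_magneticGradSq_add]
    field_simp
    ring
  unfold tfEnergy gpEnergy
  rw [← integral_const_mul, ← integral_const_mul, integral_congr_ae (.of_forall hsplit),
    integral_sub (hΨ.integrableOn_gpDensity.const_mul _) htf, sub_add_cancel]

lemma gpAdm.tfEnergy_le (hε : ε ≠ 0) (hΨ : gpAdm Ψ) :
    tfEnergy Ω₀ (fun x ↦ ‖Ψ x‖ ^ 2) ≤ ε ^ 2 * gpEnergy ε (Ω₀ / ε) Ψ := by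
  rw [hΨ.sq_mul_gpEnergy_eq hε]
  exact le_add_of_nonneg_left
    (mul_nonneg (sq_nonneg ε) (integral_nonneg fun x ↦ magneticGradSq_nonneg _ Ψ x))

lemma integral_hole_norm_pow_four_le (h : 4 / √π < Ω₀) (hε : ε ≠ 0) (hΨ : gpAdm Ψ) :
    ∫ x in Metric.ball 0 (R0 Ω₀), ‖Ψ x‖ ^ 4 ≤
      ε ^ 2 * gpEnergy ε (Ω₀ / ε) Ψ - tfEnergy Ω₀ (rhoTF Ω₀) := by
  have hhole := integral_hole_sq_le h hΨ.tfAdm_norm_sq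
  simp only [← pow_mul] at hhole
  linarith [hΨ.tfEnergy_le hε (Ω₀ := Ω₀)]

lemma gpAdm.neg_sq_div_four_le_gpEnergy (hΨ : gpAdm Ψ) : -(Ω ^ 2 / 4) ≤ gpEnergy ε Ω Ψ := by
  have hmass : ∫ x in B1, -(Ω ^ 2 / 4) * ‖Ψ x‖ ^ 2 = -(Ω ^ 2 / 4) := by
    rw [integral_const_mul, hΨ.2.2.2.2.2, mul_one]
  rw [← hmass]
  refine setIntegral_mono_on (hΨ.2.1.const_mul _) hΨ.integrableOn_gpDensity measurableSet_B1
    fun x hx ↦ ?_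
  have hcentrifugal : Ω ^ 2 / 4 * ‖x‖ ^ 2 * ‖Ψ x‖ ^ 2 ≤ Ω ^ 2 / 4 * ‖Ψ x‖ ^ 2 := by
    gcongr
    exact mul_le_of_le_one_right (by positivity) (norm_sq_lt_one_of_mem_B1 hx).le
  have hquartic : 0 ≤ ‖Ψ x‖ ^ 4 / ε ^ 2 := by positivity
  rw [gpDensity_eq_magneticGradSq_add]
  linarith [magneticGradSq_nonneg Ω Ψ x]

lemma IsGPMinimizer.gpEnergy_le (hΨ : IsGPMinimizer ε Ω Ψ) {Φ : Pt → ℂ} (hΦ : gpAdm Φ) :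
    gpEnergy ε Ω Ψ ≤ gpEnergy ε Ω Φ := by
  rw [hΨ.2]
  refine csInf_le ⟨-(Ω ^ 2 / 4), ?_⟩ ⟨Φ, hΦ, rfl⟩
  rintro - ⟨Φ', hΦ', rfl⟩
  exact hΦ'.neg_sq_div_four_le_gpEnergy

lemma gpAdm_of_contDiff (hΨ : ContDiff ℝ 1 Ψ) (hmass : ∫ x in B1, ‖Ψ x‖ ^ 2 = 1) : gpAdm Ψ := by
  have hcont := hΨ.continuous
  have hfderiv := hΨ.continuous_fderiv one_ne_zero
  have hpd₁ : Continuous (pd1 Ψ) := hfderiv.clm_apply continuous_const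
  have hpd₂ : Continuous (pd2 Ψ) := hfderiv.clm_apply continuous_const
  have hrot : Continuous fun x ↦ (conj (Ψ x) * angMom Ψ x).re := by
    unfold angMom
    fun_prop
  exact ⟨(hΨ.differentiable one_ne_zero).differentiableOn,
    integrableOn_B1_of_continuous (by fun_prop), integrableOn_B1_of_continuous (by fun_prop),
    integrableOn_B1_of_continuous (by fun_prop), integrableOn_B1_of_continuous hrot, hmass⟩

lemma abs_one_sub_integral_le {α : Type*} [MeasurableSpace α] {μ : Measure α} {f g : α → ℝ}
    (hf : Integrable f μ) (hg : Integrable g μ) (hg₁ : ∫ x, g x ∂μ = 1) :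
    |1 - ∫ x, f x ∂μ| ≤ ∫ x, |f x - g x| ∂μ := by
  rw [← hg₁, abs_sub_comm, ← integral_sub hf hg]
  exact abs_integral_le_integral_abs

lemma integral_abs_div_integral_sub_le {α : Type*} [MeasurableSpace α] {μ : Measure α}
    {f g : α → ℝ} (hf : Integrable f μ) (hg : Integrable g μ) (hf₀ : 0 ≤ f)
    (hg₁ : ∫ x, g x ∂μ = 1) (hpos : 0 < ∫ x, f x ∂μ) :
    ∫ x, |f x / (∫ y, f y ∂μ) - g x| ∂μ ≤ 2 * ∫ x, |f x - g x| ∂μ := by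
  have hmass := abs_one_sub_integral_le hf hg hg₁
  set m := ∫ x, f x ∂μ
  have hdiff : Integrable (fun x ↦ |f x - g x|) μ := (hf.sub hg).abs
  have htriangle (x : α) : |f x / m - g x| ≤ |m⁻¹ - 1| * f x + |f x - g x| := by
    calc |f x / m - g x| = |(m⁻¹ - 1) * f x + (f x - g x)| := by congr 1; ring
      _ ≤ |(m⁻¹ - 1) * f x| + |f x - g x| := abs_add_le _ _
      _ = |m⁻¹ - 1| * f x + |f x - g x| := by rw [abs_mul, abs_of_nonneg (hf₀ x)]
  calc ∫ x, |f x / m - g x| ∂μ ≤ ∫ x, (|m⁻¹ - 1| * f x + |f x - g x|) ∂μ :=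
        integral_mono ((hf.div_const m).sub hg).abs ((hf.const_mul _).add hdiff) htriangle
    _ = |m⁻¹ - 1| * |m| + ∫ x, |f x - g x| ∂μ := by
        rw [integral_add (hf.const_mul _) hdiff, integral_const_mul, abs_of_pos hpos]
    _ = |1 - m| + ∫ x, |f x - g x| ∂μ := by
        rw [← abs_mul, sub_mul, inv_mul_cancel₀ hpos.ne', one_mul]
    _ ≤ 2 * ∫ x, |f x - g x| ∂μ := by linarith

/-- The multiple of `Φ` with unit mass on the disc (`0` if `Φ` has no mass), used to turn a trial
function into an admissible one. -/
def massNormalized (Φ : Pt → ℂ) (x : Pt) : ℂ :=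
  ((√(∫ y in B1, ‖Φ y‖ ^ 2))⁻¹ : ℝ) * Φ x

lemma norm_inv_sqrt_mass_sq (Φ : Pt → ℂ) :
    ‖(((√(∫ y in B1, ‖Φ y‖ ^ 2))⁻¹ : ℝ) : ℂ)‖ ^ 2 = (∫ y in B1, ‖Φ y‖ ^ 2)⁻¹ := by
  rw [Complex.norm_real, norm_eq_abs, sq_abs, inv_pow,
    sq_sqrt (integral_nonneg fun y ↦ sq_nonneg _)]

lemma norm_massNormalized_sq (Φ : Pt → ℂ) (x : Pt) :
    ‖massNormalized Φ x‖ ^ 2 = ‖Φ x‖ ^ 2 / ∫ y in B1, ‖Φ y‖ ^ 2 := by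
  rw [massNormalized, norm_mul, mul_pow, norm_inv_sqrt_mass_sq, inv_mul_eq_div]

lemma magneticGradSq_massNormalized (hΨ : Differentiable ℝ Ψ) (x : Pt) :
    magneticGradSq Ω (massNormalized Ψ) x =
      magneticGradSq Ω Ψ x / ∫ y in B1, ‖Ψ y‖ ^ 2 := by
  rw [show massNormalized Ψ = fun x ↦ _ * Ψ x from rfl, magneticGradSq_const_mul hΨ,
    norm_inv_sqrt_mass_sq, inv_mul_eq_div]

lemma gpAdm_massNormalized (hΨ : ContDiff ℝ 1 Ψ) (hpos : 0 < ∫ x in B1, ‖Ψ x‖ ^ 2) :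
    gpAdm (massNormalized Ψ) := by
  refine gpAdm_of_contDiff (contDiff_const.mul hΨ) ?_
  simp only [norm_massNormalized_sq, integral_div]
  exact div_self hpos.ne'

lemma sq_mul_gpEnergy_massNormalized_le (h : 4 / √π < Ω₀) (hε : ε ≠ 0) {Φ : Pt → ℂ} {M : ℝ}
    (hΦ : ContDiff ℝ 1 Φ) (hΦM : ∀ x ∈ B1, ‖Φ x‖ ^ 2 ≤ M) (hM : ∀ x ∈ B1, rhoTF Ω₀ x ≤ M)
    (hmass : 1 / 2 ≤ ∫ x in B1, ‖Φ x‖ ^ 2) :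
    ε ^ 2 * gpEnergy ε (Ω₀ / ε) (massNormalized Φ) ≤ tfEnergy Ω₀ (rhoTF Ω₀)
      + 2 * (ε ^ 2 * ∫ x in B1, magneticGradSq (Ω₀ / ε) Φ x)
      + (4 * M + Ω₀ ^ 2 / 4) * (2 * ∫ x in B1, |‖Φ x‖ ^ 2 - rhoTF Ω₀ x|) := by
  have hΦc := hΦ.continuous
  have hTFc := continuous_rhoTF h
  have hpos : 0 < ∫ x in B1, ‖Φ x‖ ^ 2 := one_half_pos.trans_le hmass
  have hinv : (∫ x in B1, ‖Φ x‖ ^ 2)⁻¹ ≤ 2 := by simpa using inv_anti₀ one_half_pos hmass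
  have hM₀ : 0 ≤ M := (rhoTF_nonneg h 0).trans (hM 0 (Metric.mem_ball_self one_pos))
  have hmagnetic : ∫ x in B1, magneticGradSq (Ω₀ / ε) (massNormalized Φ) x ≤
      2 * ∫ x in B1, magneticGradSq (Ω₀ / ε) Φ x := by
    simp only [magneticGradSq_massNormalized (hΦ.differentiable one_ne_zero), div_eq_inv_mul,
      integral_const_mul]
    exact mul_le_mul_of_nonneg_right hinv (integral_nonneg (magneticGradSq_nonneg _ Φ))
  have hbounded : ∀ x ∈ B1, ‖Φ x‖ ^ 2 / (∫ y in B1, ‖Φ y‖ ^ 2) ∈ Set.Icc 0 (2 * M) := by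
    refine fun x hx ↦ ⟨by positivity, ?_⟩
    rw [div_eq_inv_mul]
    exact mul_le_mul hinv (hΦM x hx) (sq_nonneg _) zero_le_two
  have htf : tfEnergy Ω₀ (fun x ↦ ‖massNormalized Φ x‖ ^ 2) - tfEnergy Ω₀ (rhoTF Ω₀) ≤
      (4 * M + Ω₀ ^ 2 / 4) * (2 * ∫ x in B1, |‖Φ x‖ ^ 2 - rhoTF Ω₀ x|) := by
    simp only [norm_massNormalized_sq]
    refine (tfEnergy_sub_le (by fun_prop) hTFc hbounded fun x hx ↦
      ⟨rhoTF_nonneg h x, (hM x hx).trans (by linarith)⟩).trans ?_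
    rw [show 2 * (2 * M) = 4 * M by ring]
    gcongr
    exact integral_abs_div_integral_sub_le (integrableOn_B1_of_continuous (by fun_prop))
      (integrableOn_B1_of_continuous hTFc) (fun x ↦ sq_nonneg _) (integral_rhoTF h) hpos
  rw [(gpAdm_massNormalized hΦ hpos).sq_mul_gpEnergy_eq hε]
  nlinarith [mul_le_mul_of_nonneg_left hmagnetic (sq_nonneg ε)]

end GrossPitaevskii

section CovariantDerivative

/-- The covariant derivative `f' - iαf` of a curve `f` at a point where the connection has the
value `α`. -/
def covDeriv (α : ℝ) (f : ℝ → ℂ) (t : ℝ) : ℂ := deriv f t - α * Complex.I * f t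

variable {α t : ℝ} {w : ℝ → ℂ}

lemma covDeriv_ofReal_mul {a : ℝ → ℝ} {a' : ℝ} (ha : HasDerivAt a a' t)
    (hw : DifferentiableAt ℝ w t) :
    covDeriv α (fun t ↦ a t * w t) t = a' * w t + a t * covDeriv α w t := by
  rw [covDeriv, covDeriv, (ha.ofReal_comp.fun_mul hw.hasDerivAt).deriv]
  ring

lemma covDeriv_exp_mul {g : ℝ → ℝ} {g' : ℝ} (hg : HasDerivAt g g' t)
    (hw : DifferentiableAt ℝ w t) :
    covDeriv α (fun t ↦ Complex.exp (g t * Complex.I) * w t) t =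
      Complex.exp (g t * Complex.I) * covDeriv (α - g') w t := by
  have hphase : HasDerivAt (fun t ↦ Complex.exp (g t * Complex.I))
      (Complex.exp (g t * Complex.I) * (g' * Complex.I)) t :=
    (hg.ofReal_comp.mul_const Complex.I).cexp
  rw [covDeriv, covDeriv, (hphase.fun_mul hw.hasDerivAt).deriv]
  push_cast
  ring

lemma covDeriv_comp_mul_left (c : ℝ) :
    covDeriv (c * α) (fun t ↦ w (c * t)) t = c * covDeriv α w (c * t) := by
  rw [covDeriv, covDeriv, deriv_comp_mul_left, Complex.real_smul]
  push_cast
  ring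

lemma inner_covDeriv : inner ℝ (w t) (covDeriv α w t) = inner ℝ (w t) (deriv w t) := by
  have horth : inner ℝ (w t) (α * Complex.I * w t) = 0 := by
    simp [Complex.inner, Complex.mul_re, Complex.mul_im]
    ring
  rw [covDeriv, inner_sub_right, horth, sub_zero]

lemma covDeriv_sum {ι : Type*} {J : Finset ι} {f : ι → ℝ → ℂ}
    (hf : ∀ j ∈ J, DifferentiableAt ℝ (f j) t) :
    covDeriv α (fun t ↦ ∑ j ∈ J, f j t) t = ∑ j ∈ J, covDeriv α (f j) t := by
  simp only [covDeriv, deriv_fun_sum hf, Finset.mul_sum, Finset.sum_sub_distrib]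

/-- The phase of `z`, smoothed out where `‖z‖²` is of order `η` or smaller. -/
def softPhase (η : ℝ) (z : ℂ) : ℂ := ((√(‖z‖ ^ 2 + η))⁻¹ : ℝ) * z

variable {η : ℝ}

lemma norm_softPhase_sq (hη : 0 < η) (z : ℂ) :
    ‖softPhase η z‖ ^ 2 = ‖z‖ ^ 2 / (‖z‖ ^ 2 + η) := by
  rw [softPhase, norm_mul, mul_pow, Complex.norm_real, norm_eq_abs, sq_abs, inv_pow,
    sq_sqrt (by positivity), inv_mul_eq_div]

lemma norm_softPhase_sq_le_one (hη : 0 < η) (z : ℂ) : ‖softPhase η z‖ ^ 2 ≤ 1 := by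
  rw [norm_softPhase_sq hη]
  exact div_le_one_of_le₀ (by linarith) (by positivity)

lemma one_sub_norm_softPhase_sq (hη : 0 < η) (z : ℂ) :
    1 - ‖softPhase η z‖ ^ 2 = η / (‖z‖ ^ 2 + η) := by
  rw [norm_softPhase_sq hη]
  field_simp
  ring

lemma contDiff_softPhase (hη : 0 < η) : ContDiff ℝ 1 (softPhase η) := by
  have hsq : ContDiff ℝ 1 fun z : ℂ ↦ ‖z‖ ^ 2 + η := (contDiff_norm_sq ℝ).add contDiff_const
  exact (Complex.ofRealCLM.contDiff.comp <| (hsq.sqrt fun z ↦ by positivity).inv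
    fun z ↦ by positivity).mul contDiff_id

lemma hasDerivAt_inv_sqrt_norm_sq_add (hη : 0 < η) (hw : DifferentiableAt ℝ w t) :
    HasDerivAt (fun t ↦ (√(‖w t‖ ^ 2 + η))⁻¹)
      (-inner ℝ (w t) (deriv w t) / √(‖w t‖ ^ 2 + η) ^ 3) t := by
  have hpos : 0 < ‖w t‖ ^ 2 + η := by positivity
  refine (((hw.hasDerivAt.norm_sq.add_const η).sqrt hpos.ne').inv
    (Real.sqrt_pos.2 hpos).ne').congr_deriv ?_
  have := Real.sqrt_pos.2 hpos
  field_simp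

lemma norm_covDeriv_softPhase_sq_le (hη : 0 < η) (hw : DifferentiableAt ℝ w t) :
    ‖covDeriv α (fun t ↦ softPhase η (w t)) t‖ ^ 2 ≤
      4 * ‖covDeriv α w t‖ ^ 2 / (‖w t‖ ^ 2 + η) := by
  set D := covDeriv α w t
  set S := √(‖w t‖ ^ 2 + η)
  have hpos : 0 < ‖w t‖ ^ 2 + η := by positivity
  have hS : 0 < S := Real.sqrt_pos.2 hpos
  have hS₂ : S ^ 2 = ‖w t‖ ^ 2 + η := sq_sqrt hpos.le
  have hradial : |inner ℝ (w t) (deriv w t)| * ‖w t‖ ≤ S ^ 2 * ‖D‖ := by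
    rw [← inner_covDeriv (α := α), hS₂]
    nlinarith [abs_real_inner_le_norm (w t) D, norm_nonneg (w t), norm_nonneg D]
  have hnorm : ‖covDeriv α (fun t ↦ softPhase η (w t)) t‖ ≤ 2 * ‖D‖ / S := by
    calc ‖covDeriv α (fun t ↦ softPhase η (w t)) t‖
        = ‖((-inner ℝ (w t) (deriv w t) / S ^ 3 : ℝ) : ℂ) * w t + (S⁻¹ : ℝ) * D‖ := by
          rw [← covDeriv_ofReal_mul (hasDerivAt_inv_sqrt_norm_sq_add hη hw) hw]
          rfl
      _ ≤ |inner ℝ (w t) (deriv w t)| * ‖w t‖ / S ^ 3 + ‖D‖ / S := by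
          refine (norm_add_le _ _).trans_eq ?_
          simp only [norm_mul, Complex.norm_real, norm_eq_abs, abs_div, abs_neg, abs_inv,
            abs_pow, abs_of_pos hS]
          ring
      _ ≤ S ^ 2 * ‖D‖ / S ^ 3 + ‖D‖ / S := by gcongr
      _ = 2 * ‖D‖ / S := by
          field_simp
          norm_num
  calc ‖covDeriv α (fun t ↦ softPhase η (w t)) t‖ ^ 2 ≤ (2 * ‖D‖ / S) ^ 2 := by gcongr
    _ = 4 * ‖D‖ ^ 2 / (‖w t‖ ^ 2 + η) := by
        rw [div_pow, mul_pow, hS₂]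
        norm_num

lemma norm_covDeriv_mul_exp_mul_softPhase_sq_le (hη : 0 < η) {a g : ℝ → ℝ} {a' g' β c : ℝ}
    (ha : HasDerivAt a a' t) (hg : HasDerivAt g g' t) (hw : DifferentiableAt ℝ w (c * t))
    (hα : α - g' = c * β) :
    ‖covDeriv α (fun t ↦ a t * (Complex.exp (g t * Complex.I) * softPhase η (w (c * t)))) t‖ ^ 2 ≤
      2 * a' ^ 2
        + 8 * a t ^ 2 * c ^ 2 * ‖covDeriv β w (c * t)‖ ^ 2 / (‖w (c * t)‖ ^ 2 + η) := by
  let u : ℝ → ℂ := fun s ↦ softPhase η (w s)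
  have hu : DifferentiableAt ℝ (fun t ↦ u (c * t)) t :=
    (((contDiff_softPhase hη).differentiable one_ne_zero _).comp (c * t) hw).comp t
      (differentiableAt_id.const_mul c)
  have hphase : DifferentiableAt ℝ (fun t ↦ Complex.exp (g t * Complex.I)) t :=
    (hg.ofReal_comp.mul_const Complex.I).cexp.differentiableAt
  have hsum (x y : ℂ) : ‖x + y‖ ^ 2 ≤ 2 * ‖x‖ ^ 2 + 2 * ‖y‖ ^ 2 := by
    nlinarith [norm_add_le x y, norm_nonneg (x + y), sq_nonneg (‖x‖ - ‖y‖)]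
  have hu₁ : ‖u (c * t)‖ ^ 2 ≤ 1 := norm_softPhase_sq_le_one hη _
  calc ‖covDeriv α (fun t ↦ a t * (Complex.exp (g t * Complex.I) * u (c * t))) t‖ ^ 2
      = ‖a' * (Complex.exp (g t * Complex.I) * u (c * t))
          + a t * (Complex.exp (g t * Complex.I) * (c * covDeriv β u (c * t)))‖ ^ 2 := by
        rw [covDeriv_ofReal_mul ha (hphase.fun_mul hu), covDeriv_exp_mul hg hu, hα,
          covDeriv_comp_mul_left]
    _ ≤ 2 * (a' ^ 2 * ‖u (c * t)‖ ^ 2) + 2 * (a t ^ 2 * (c ^ 2 * ‖covDeriv β u (c * t)‖ ^ 2)) := by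
        refine (hsum _ _).trans_eq ?_
        simp only [norm_mul, mul_pow, Complex.norm_real, norm_eq_abs, sq_abs,
          Complex.norm_exp_ofReal_mul_I, one_mul]
    _ ≤ 2 * (a' ^ 2 * 1) + 2 * (a t ^ 2 * (c ^ 2 *
          (4 * ‖covDeriv β w (c * t)‖ ^ 2 / (‖w (c * t)‖ ^ 2 + η)))) := by
        gcongr
        exact norm_covDeriv_softPhase_sq_le hη hw
    _ = _ := by ring

end CovariantDerivative

section VortexLattice

/-- A `C¹` bump supported in `[-1, 1]`, the amplitude of one Fourier mode of the vortex lattice. -/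
def bump (r : ℝ) : ℝ := max 0 (1 - r ^ 2) ^ 2

lemma max_zero_one_sub_sq_of_one_le_abs {r : ℝ} (hr : 1 ≤ |r|) : max 0 (1 - r ^ 2) = 0 :=
  max_eq_left (by linarith [one_le_sq_iff_one_le_abs r |>.2 hr])

lemma bump_of_one_le_abs {r : ℝ} (hr : 1 ≤ |r|) : bump r = 0 := by
  rw [bump, max_zero_one_sub_sq_of_one_le_abs hr, zero_pow two_ne_zero]

lemma bump_of_abs_le_one {r : ℝ} (hr : |r| ≤ 1) : bump r = (1 - r ^ 2) ^ 2 := by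
  rw [bump, max_eq_right (by linarith [sq_le_one_iff_abs_le_one r |>.2 hr])]

lemma bump_nonneg (r : ℝ) : 0 ≤ bump r := sq_nonneg _

lemma hasDerivAt_bump (r : ℝ) : HasDerivAt bump (-4 * r * max 0 (1 - r ^ 2)) r :=
  (HasDerivAt.comp (h₂ := fun t ↦ max 0 t ^ 2) r (hasDerivAt_max_zero_sq (1 - r ^ 2))
    ((hasDerivAt_pow 2 r).const_sub 1)).congr_deriv (by push_cast; ring)

lemma contDiff_bump : ContDiff ℝ 1 bump := by
  rw [contDiff_one_iff_deriv, funext fun r ↦ (hasDerivAt_bump r).deriv]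
  exact ⟨fun r ↦ (hasDerivAt_bump r).differentiableAt, by fun_prop⟩

lemma abs_mul_max_zero_one_sub_sq_le (r : ℝ) : |r| * max 0 (1 - r ^ 2) ≤ 1 / 2 := by
  rcases le_total 1 |r| with hr | hr
  · rw [max_zero_one_sub_sq_of_one_le_abs hr, mul_zero]
    exact one_half_pos.le
  · rw [← sq_abs, max_eq_right (by nlinarith [abs_nonneg r])]
    nlinarith [abs_nonneg r, sq_nonneg (2 * |r| - 1)]

lemma abs_mul_bump_le (r : ℝ) : |r| * bump r ≤ 1 / 2 := by
  have hle : max 0 (1 - r ^ 2) ≤ 1 := max_le zero_le_one (sub_le_self 1 (sq_nonneg r))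
  calc |r| * bump r = |r| * max 0 (1 - r ^ 2) * max 0 (1 - r ^ 2) := by rw [bump]; ring
    _ ≤ 1 / 2 * 1 := by
        gcongr
        exact abs_mul_max_zero_one_sub_sq_le r
    _ = 1 / 2 := mul_one _

lemma sum_Icc_eq_floor_add {E : Type*} [AddCommMonoid E] {N : ℕ} {s : ℝ} (hs : |s| + 1 ≤ N)
    {F : ℤ → E} (hF : ∀ j : ℤ, 1 ≤ |s - j| → F j = 0) :
    ∑ j ∈ Finset.Icc (-N : ℤ) N, F j = F ⌊s⌋ + F (⌊s⌋ + 1) := by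
  have hfloor := Int.floor_le s
  have hfloor' := Int.lt_floor_add_one s
  have hsN := abs_le.1 (le_sub_right_of_add_le hs)
  have hlower : -(N : ℤ) ≤ ⌊s⌋ := Int.le_floor.2 (by push_cast; linarith)
  have hupper : ⌊s⌋ + 1 ≤ (N : ℤ) := by
    have : (⌊s⌋ : ℝ) + 1 ≤ N := by linarith
    exact_mod_cast this
  rw [← Finset.sum_pair (f := F) (lt_add_one ⌊s⌋).ne]
  refine (Finset.sum_subset (fun j hj ↦ ?_) fun j _ hj ↦ hF j ?_).symm
  · simp only [Finset.mem_insert, Finset.mem_singleton] at hj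
    rw [Finset.mem_Icc]
    omega
  · simp only [Finset.mem_insert, Finset.mem_singleton, not_or] at hj
    rcases (show j ≤ ⌊s⌋ - 1 ∨ ⌊s⌋ + 2 ≤ j by omega) with hj | hj
    · have : (j : ℝ) ≤ ⌊s⌋ - 1 := by exact_mod_cast hj
      exact le_abs.2 (.inl (by linarith))
    · have : (⌊s⌋ : ℝ) + 2 ≤ j := by exact_mod_cast hj
      exact le_abs.2 (.inr (by linarith))

lemma norm_sum_Icc_le {E : Type*} [SeminormedAddCommGroup E] {N : ℕ} {s B : ℝ}
    (hs : |s| + 1 ≤ N) {F : ℤ → E} (hF : ∀ j : ℤ, 1 ≤ |s - j| → F j = 0)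
    (hB : ∀ j, ‖F j‖ ≤ B) : ‖∑ j ∈ Finset.Icc (-N : ℤ) N, F j‖ ≤ 2 * B := by
  rw [sum_Icc_eq_floor_add hs hF, two_mul]
  exact norm_add_le_of_le (hB _) (hB _)

/-- The truncated theta-like series `∑ⱼ bump (s - j) exp (2πijt)`. Where `|s| + 1 ≤ N` it is
quasi-periodic for `ℤ²`, with a vortex at each point of `(1/2, 1/2) + ℤ²`. -/
def vortexSum (N : ℕ) (s t : ℝ) : ℂ :=
  ∑ j ∈ Finset.Icc (-N : ℤ) N, bump (s - j) * Complex.exp ((2 * π * j * t : ℝ) * Complex.I)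

variable {N : ℕ} {s : ℝ}

lemma contDiff_vortexSum {E : Type*} [NormedAddCommGroup E] [NormedSpace ℝ E] {f g : E → ℝ}
    (hf : ContDiff ℝ 1 f) (hg : ContDiff ℝ 1 g) :
    ContDiff ℝ 1 fun x ↦ vortexSum N (f x) (g x) := by
  refine ContDiff.sum fun j _ ↦ ContDiff.mul ?_ (ContDiff.cexp (ContDiff.mul ?_ contDiff_const))
  · exact Complex.ofRealCLM.contDiff.comp (contDiff_bump.comp (hf.sub contDiff_const))
  · exact Complex.ofRealCLM.contDiff.comp (contDiff_const.mul hg)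

lemma norm_covDeriv_vortexSum_left_le (hs : |s| + 1 ≤ N) (t : ℝ) :
    ‖covDeriv 0 (fun s ↦ vortexSum N s t) s‖ ≤ 4 := by
  have hterm (j : ℤ) : HasDerivAt (fun s ↦ bump (s - j))
      (-4 * (s - j) * max 0 (1 - (s - j) ^ 2)) s := (hasDerivAt_bump _).comp_sub_const s j
  unfold vortexSum
  rw [covDeriv_sum fun j _ ↦ (hterm j).ofReal_comp.differentiableAt.mul_const _]
  refine (norm_sum_Icc_le hs (B := 2) (fun j hj ↦ ?_) fun j ↦ ?_).trans_eq (by norm_num)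
  all_goals
    rw [covDeriv_ofReal_mul (hterm j) (differentiableAt_const _), covDeriv, deriv_const]
  · simp [max_zero_one_sub_sq_of_one_le_abs hj]
  · simp only [Complex.ofReal_zero, zero_mul, sub_zero, mul_zero, add_zero, norm_mul,
      Complex.norm_real, Complex.norm_exp_ofReal_mul_I, mul_one, norm_eq_abs,
      abs_of_nonneg (le_max_left 0 (1 - (s - j) ^ 2))]
    norm_num
    linarith [abs_mul_max_zero_one_sub_sq_le (s - j)]

lemma norm_covDeriv_vortexSum_right_le (hs : |s| + 1 ≤ N) (t : ℝ) :
    ‖covDeriv (2 * π * s) (fun t ↦ vortexSum N s t) t‖ ≤ 2 * π := by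
  have hphase (j : ℤ) : HasDerivAt (fun t : ℝ ↦ 2 * π * j * t) (2 * π * j) t := by
    simpa using (hasDerivAt_id t).const_mul (2 * π * j)
  have hterm (j : ℤ) : covDeriv (2 * π * s)
      (fun t ↦ bump (s - j) * Complex.exp ((2 * π * j * t : ℝ) * Complex.I)) t =
        ((-(2 * π * ((s - j) * bump (s - j))) : ℝ) : ℂ) * Complex.I
          * Complex.exp ((2 * π * j * t : ℝ) * Complex.I) := by
    rw [covDeriv, (((hphase j).ofReal_comp.mul_const Complex.I).cexp.const_mul _).deriv]
    push_cast
    ring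
  unfold vortexSum
  rw [covDeriv_sum fun j _ ↦
    (((hphase j).ofReal_comp.mul_const Complex.I).cexp.const_mul _).differentiableAt]
  simp only [hterm]
  refine (norm_sum_Icc_le hs (B := π) (fun j hj ↦ ?_) fun j ↦ ?_)
  · simp [bump_of_one_le_abs hj]
  · rw [norm_mul, norm_mul, Complex.norm_exp_ofReal_mul_I, Complex.norm_I, mul_one, mul_one,
      Complex.norm_real, norm_eq_abs, abs_neg, abs_mul, abs_of_pos two_pi_pos, abs_mul,
      abs_of_nonneg (bump_nonneg _)]
    nlinarith [abs_mul_bump_le (s - j), pi_pos]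

lemma norm_sq_add_mul_exp (a b θ : ℝ) :
    ‖(a : ℂ) + b * Complex.exp (θ * Complex.I)‖ ^ 2 = (a - b) ^ 2 + 2 * a * b * (1 + cos θ) := by
  rw [← Complex.normSq_eq_norm_sq, Complex.normSq_apply, Complex.exp_mul_I, ← Complex.ofReal_cos,
    ← Complex.ofReal_sin]
  simp only [Complex.add_re, Complex.add_im, Complex.mul_re, Complex.mul_im, Complex.ofReal_re,
    Complex.ofReal_im, Complex.I_re, Complex.I_im]
  linear_combination b ^ 2 * sin_sq_add_cos_sq θ

lemma norm_vortexSum_sq (hs : |s| + 1 ≤ N) (t : ℝ) :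
    ‖vortexSum N s t‖ ^ 2 = (bump (Int.fract s) - bump (1 - Int.fract s)) ^ 2
      + 2 * bump (Int.fract s) * bump (1 - Int.fract s) * (1 + cos (2 * π * t)) := by
  have heven : bump (s - (⌊s⌋ + 1 : ℤ)) = bump (1 - Int.fract s) := by
    rw [bump, bump, ← Int.self_sub_floor]
    push_cast
    ring_nf
  have hphase : ((2 * π * (⌊s⌋ + 1 : ℤ) * t : ℝ) : ℂ) * Complex.I =
      (2 * π * ⌊s⌋ * t : ℝ) * Complex.I + (2 * π * t : ℝ) * Complex.I := by
    push_cast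
    ring
  rw [vortexSum, sum_Icc_eq_floor_add hs fun j hj ↦ by simp [bump_of_one_le_abs hj], heven,
    Int.self_sub_floor, hphase, Complex.exp_add, mul_left_comm, mul_comm _ (Complex.exp _),
    ← mul_add, norm_mul, Complex.norm_exp_ofReal_mul_I, one_mul, norm_sq_add_mul_exp]

lemma cos_pi_mul_sq_le (s : ℝ) : cos (π * s) ^ 2 ≤ 5 / 2 * (1 - 2 * Int.fract s) ^ 2 := by
  have hfract : cos (π * s) ^ 2 = cos (π * Int.fract s) ^ 2 := by
    rw [cos_sq, cos_sq, ← Int.self_sub_floor,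
      show 2 * (π * (s - ⌊s⌋)) = 2 * (π * s) - ⌊s⌋ * (2 * π) by ring, cos_sub_int_mul_two_pi]
  have hsin : |cos (π * Int.fract s)| ≤ |π / 2 * (1 - 2 * Int.fract s)| := by
    rw [← sin_pi_div_two_sub]
    exact abs_sin_le_abs.trans_eq (by ring_nf)
  have hpi : π ^ 2 / 4 ≤ 5 / 2 := by nlinarith [pi_lt_d2, pi_pos]
  calc cos (π * s) ^ 2 ≤ (π / 2 * (1 - 2 * Int.fract s)) ^ 2 := hfract ▸ sq_le_sq.2 hsin
    _ = π ^ 2 / 4 * (1 - 2 * Int.fract s) ^ 2 := by ring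
    _ ≤ 5 / 2 * (1 - 2 * Int.fract s) ^ 2 := by gcongr

lemma le_norm_vortexSum_sq (hs : |s| + 1 ≤ N) (t : ℝ) :
    (cos (π * s) ^ 2 + cos (π * t) ^ 2) / 4 ≤ ‖vortexSum N s t‖ ^ 2 := by
  have hr₀ := Int.fract_nonneg s
  have hr₁ := (Int.fract_lt_one s).le
  have hcos := cos_pi_mul_sq_le s
  rw [norm_vortexSum_sq hs, mul_assoc 2 π t, cos_two_mul,
    bump_of_abs_le_one (abs_le.2 ⟨by linarith, hr₁⟩),
    bump_of_abs_le_one (abs_le.2 ⟨by linarith, by linarith⟩)]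
  set r := Int.fract s
  set q := r * (1 - r) with hq
  set c := cos (π * t) ^ 2
  have hc₀ : 0 ≤ c := sq_nonneg _
  have hc₁ : c ≤ 1 := cos_sq_le_one _
  have hq₀ : 0 ≤ q := mul_nonneg hr₀ (by linarith)
  have hD : (1 - 2 * r) ^ 2 = 1 - 4 * q := by ring
  have hD₀ : 0 ≤ 1 - 4 * q := hD ▸ sq_nonneg _
  calc (cos (π * s) ^ 2 + c) / 4 ≤ (5 / 2 * (1 - 4 * q) + c) / 4 := by rw [← hD]; gcongr
    _ ≤ (1 - 4 * q) + 16 * q ^ 2 * c := by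
        nlinarith [mul_nonneg hc₀ hD₀, mul_nonneg (sub_nonneg.2 hc₁) hD₀, sq_nonneg (8 * q - 1)]
    _ ≤ (1 - 4 * q) * (1 + 2 * q) ^ 2 + 4 * (q * (2 + q)) ^ 2 * c := by
        gcongr ?_ + ?_ * c
        · exact le_mul_of_one_le_right hD₀ (by nlinarith)
        · nlinarith [pow_nonneg hq₀ 3, pow_nonneg hq₀ 4]
    _ = _ := by rw [hq]; ring

end VortexLattice

section KernelIntegral

lemma integral_le_of_periodic {G : ℝ → ℝ} {T a b : ℝ} (hper : G.Periodic T) (hT : 0 < T)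
    (hcont : Continuous G) (hnonneg : ∀ s, 0 ≤ G s) (hab : a ≤ b) :
    ∫ s in a..b, G s ≤ ((b - a) / T + 1) * ∫ s in (0)..T, G s := by
  set n := ⌈(b - a) / T⌉₊
  have hlen : b - a ≤ n * T := (div_le_iff₀ hT).1 (Nat.le_ceil _)
  have hint (a b : ℝ) : IntervalIntegrable G volume a b := hcont.intervalIntegrable a b
  have hperiod : 0 ≤ ∫ s in (0)..T, G s :=
    intervalIntegral.integral_nonneg hT.le fun s _ ↦ hnonneg s
  calc ∫ s in a..b, G s ≤ ∫ s in a..(a + (n : ℤ) • T), G s :=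
        intervalIntegral.integral_mono_interval le_rfl hab (by simp; linarith)
          (Eventually.of_forall hnonneg) (hint _ _)
    _ = n * ∫ s in (0)..T, G s := by
        rw [hper.intervalIntegral_add_zsmul_eq _ _ hint, hper.intervalIntegral_add_eq a 0, zero_add]
        simp
    _ ≤ _ := by
        gcongr
        exact (Nat.ceil_lt_add_one (div_nonneg (sub_nonneg.2 hab) hT.le)).le

lemma four_mul_sq_le_sin_pi_mul_sq {v : ℝ} (hv : |v| ≤ 1 / 2) : 4 * v ^ 2 ≤ sin (π * v) ^ 2 := by
  have hle : |2 * v| ≤ |sin (π * v)| := by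
    have habs : |π * v| = π * |v| := by rw [abs_mul, abs_of_pos pi_pos]
    refine (le_of_eq ?_).trans (mul_abs_le_abs_sin (x := π * v) ?_)
    · rw [habs, abs_mul, abs_two]
      field_simp
    · rw [habs]
      nlinarith [pi_pos]
  calc 4 * v ^ 2 = (2 * v) ^ 2 := by ring
    _ ≤ sin (π * v) ^ 2 := sq_le_sq.2 hle

variable {l A : ℝ}

lemma integral_comp_cos_sq_le {g : ℝ → ℝ} (hcont : ContinuousOn g (Set.Ici 0))
    (hanti : AntitoneOn g (Set.Ici 0)) (hnonneg : ∀ u, 0 ≤ u → 0 ≤ g u) (hl : 1 ≤ l) :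
    ∫ X in (-1)..1, g (cos (π * (l * X)) ^ 2) ≤ 3 * ∫ v in (-(1 / 2))..(1 / 2), g (4 * v ^ 2) := by
  have hl₀ : 0 < l := one_pos.trans_le hl
  have hcomp {u : ℝ → ℝ} (hu : Continuous u) (hu₀ : ∀ s, 0 ≤ u s) : Continuous fun s ↦ g (u s) :=
    hcont.comp_continuous hu hu₀
  have hper : Function.Periodic (fun s ↦ g (cos (π * s) ^ 2)) 1 := fun s ↦ by
    simp only [mul_add, mul_one, cos_add_pi, neg_sq]
  have hperiod : ∫ s in (0)..1, g (cos (π * s) ^ 2)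
      ≤ ∫ v in (-(1 / 2))..(1 / 2), g (4 * v ^ 2) := by
    have hshift := intervalIntegral.integral_comp_add_right (a := -(1 / 2)) (b := 1 / 2)
      (fun s ↦ g (cos (π * s) ^ 2)) (1 / 2)
    norm_num only at hshift
    rw [← hshift]
    refine intervalIntegral.integral_mono_on (by norm_num)
      ((hcomp (by fun_prop) fun v ↦ sq_nonneg _).intervalIntegrable _ _)
      ((hcomp (by fun_prop) fun v ↦ by positivity).intervalIntegrable _ _) fun v hv ↦ ?_
    refine hanti (Set.mem_Ici.2 (by positivity)) (Set.mem_Ici.2 (sq_nonneg _)) ?_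
    rw [mul_add, mul_one_div, cos_add_pi_div_two, neg_sq]
    exact four_mul_sq_le_sin_pi_mul_sq (abs_le.2 hv)
  have hperiod₀ : 0 ≤ ∫ s in (0)..1, g (cos (π * s) ^ 2) :=
    intervalIntegral.integral_nonneg zero_le_one fun s _ ↦ hnonneg _ (sq_nonneg _)
  rw [intervalIntegral.integral_comp_mul_left (fun s ↦ g (cos (π * s) ^ 2)) hl₀.ne', smul_eq_mul,
    inv_mul_le_iff₀ hl₀]
  calc ∫ s in (l * -1)..(l * 1), g (cos (π * s) ^ 2)
      ≤ ((l * 1 - l * -1) / 1 + 1) * ∫ s in (0)..1, g (cos (π * s) ^ 2) :=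
        integral_le_of_periodic hper one_pos (hcomp (by fun_prop) fun s ↦ sq_nonneg _)
          (fun s ↦ hnonneg _ (sq_nonneg _)) (by linarith)
    _ ≤ (3 * l) * ∫ v in (-(1 / 2))..(1 / 2), g (4 * v ^ 2) :=
        mul_le_mul (by linarith) hperiod hperiod₀ (by positivity)
    _ = _ := by ring

lemma antitoneOn_inv_add (hA : 0 < A) : AntitoneOn (fun u ↦ (A + u)⁻¹) (Set.Ici 0) :=
  fun _ hu _ _ huv ↦ inv_anti₀ (add_pos_of_pos_of_nonneg hA hu) (by gcongr)

lemma antitoneOn_inv_sqrt_add (hA : 0 < A) : AntitoneOn (fun u ↦ (√(A + u))⁻¹) (Set.Ici 0) :=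
  fun _ hu _ _ huv ↦ inv_anti₀ (sqrt_pos.2 (add_pos_of_pos_of_nonneg hA hu)) (by gcongr)

lemma integral_inv_add_four_mul_sq_le (hA : 0 < A) :
    ∫ v in (-(1 / 2))..(1 / 2), (A + 4 * v ^ 2)⁻¹ ≤ π / 2 * (√A)⁻¹ := by
  have hderiv (v : ℝ) :
      HasDerivAt (fun v ↦ (2 * √A)⁻¹ * arctan (2 / √A * v)) (A + 4 * v ^ 2)⁻¹ v := by
    refine ((((hasDerivAt_id v).const_mul (2 / √A)).arctan).const_mul (2 * √A)⁻¹).congr_deriv ?_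
    have : 0 < A + 4 * v ^ 2 := by positivity
    simp only [id, mul_pow, div_pow, sq_sqrt hA.le]
    field_simp
    rw [sq_sqrt hA.le]
    ring
  rw [intervalIntegral.integral_eq_sub_of_hasDerivAt (fun v _ ↦ hderiv v)
    ((Continuous.inv₀ (by fun_prop) fun v ↦ by positivity).intervalIntegrable _ _)]
  have hodd : 2 / √A * -(1 / 2) = -(2 / √A * (1 / 2)) := by ring
  rw [hodd, arctan_neg]
  calc _ = arctan (2 / √A * (1 / 2)) * (√A)⁻¹ := by ring
    _ ≤ _ := by
        gcongr
        exact (arctan_lt_pi_div_two _).le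

lemma arsinh_le_log_three_mul {x : ℝ} (hx : 1 ≤ x) : arsinh x ≤ log (3 * x) := by
  have hsqrt : √(1 + x ^ 2) ≤ 2 * x := sqrt_le_iff.2 ⟨by linarith, by nlinarith⟩
  exact log_le_log (by positivity) (by linarith)

lemma integral_inv_sqrt_add_four_mul_sq_le (hA : 0 < A) (hA₁ : A ≤ 1) :
    ∫ v in (-(1 / 2))..(1 / 2), (√(A + 4 * v ^ 2))⁻¹ ≤ log (3 / √A) := by
  have hderiv (v : ℝ) :
      HasDerivAt (fun v ↦ 2⁻¹ * arsinh (2 / √A * v)) (√(A + 4 * v ^ 2))⁻¹ v := by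
    refine ((((hasDerivAt_id v).const_mul (2 / √A)).arsinh).const_mul 2⁻¹).congr_deriv ?_
    have hscale : √(A + 4 * v ^ 2) = √A * √(1 + (2 / √A * v) ^ 2) := by
      rw [← sqrt_mul hA.le, mul_pow, div_pow, sq_sqrt hA.le]
      congr 1
      field_simp
      ring
    simp only [id, smul_eq_mul, hscale]
    field_simp
  rw [intervalIntegral.integral_eq_sub_of_hasDerivAt (fun v _ ↦ hderiv v)
    ((Continuous.inv₀ (by fun_prop) fun v ↦ by positivity).intervalIntegrable _ _)]
  have hodd : 2 / √A * -(1 / 2) = -(2 / √A * (1 / 2)) := by ring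
  rw [hodd, arsinh_neg]
  calc _ = arsinh (1 / √A) := by ring_nf
    _ ≤ log (3 * (1 / √A)) := arsinh_le_log_three_mul
        ((one_le_div (sqrt_pos.2 hA)).2 (sqrt_le_one.2 hA₁))
    _ = _ := by rw [mul_one_div]

/-- The singular profile `(η + cos²(πs) + cos²(πt))⁻¹` of a square lattice of vortices with cores
of size `√η`. -/
def latticeKernel (η s t : ℝ) : ℝ := (η + cos (π * s) ^ 2 + cos (π * t) ^ 2)⁻¹

variable {η : ℝ}

lemma latticeKernel_nonneg (hη : 0 < η) (s t : ℝ) : 0 ≤ latticeKernel η s t := by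
  unfold latticeKernel
  positivity

lemma continuous_latticeKernel (hη : 0 < η) (l : ℝ) :
    Continuous fun p : ℝ × ℝ ↦ latticeKernel η (l * p.1) (l * p.2) :=
  Continuous.inv₀ (by fun_prop) fun p ↦ by positivity

lemma integral_latticeKernel_right_le (hη : 0 < η) (hl : 1 ≤ l) (s : ℝ) :
    ∫ Y in (-1)..1, latticeKernel η s (l * Y) ≤ 3 * π / 2 * (√(η + cos (π * s) ^ 2))⁻¹ := by
  have hA : 0 < η + cos (π * s) ^ 2 := by positivity
  calc ∫ Y in (-1)..1, latticeKernel η s (l * Y)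
      ≤ 3 * ∫ v in (-(1 / 2))..(1 / 2), (η + cos (π * s) ^ 2 + 4 * v ^ 2)⁻¹ :=
        integral_comp_cos_sq_le (g := fun u ↦ (η + cos (π * s) ^ 2 + u)⁻¹)
          (ContinuousOn.inv₀ (by fun_prop) fun u hu ↦ (add_pos_of_pos_of_nonneg hA hu).ne')
          (antitoneOn_inv_add hA) (fun u hu ↦ by positivity) hl
    _ ≤ 3 * (π / 2 * (√(η + cos (π * s) ^ 2))⁻¹) := by
        gcongr
        exact integral_inv_add_four_mul_sq_le hA
    _ = _ := by ring

lemma integral_integral_latticeKernel_le (hη : 0 < η) (hη₁ : η ≤ 1) (hl : 1 ≤ l) :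
    ∫ X in (-1)..1, ∫ Y in (-1)..1, latticeKernel η (l * X) (l * Y)
      ≤ 9 * π / 2 * log (3 / √η) := by
  have houter : ∫ X in (-1)..1, (√(η + cos (π * (l * X)) ^ 2))⁻¹ ≤ 3 * log (3 / √η) :=
    (integral_comp_cos_sq_le (g := fun u ↦ (√(η + u))⁻¹)
      (ContinuousOn.inv₀ (by fun_prop)
        fun u hu ↦ (sqrt_pos.2 (add_pos_of_pos_of_nonneg hη hu)).ne')
      (antitoneOn_inv_sqrt_add hη) (fun u _ ↦ by positivity) hl).trans
      (by gcongr; exact integral_inv_sqrt_add_four_mul_sq_le hη hη₁)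
  have hcont : Continuous fun X ↦ ∫ Y in (-1)..1, latticeKernel η (l * X) (l * Y) :=
    intervalIntegral.continuous_parametric_intervalIntegral_of_continuous'
      (continuous_latticeKernel hη l) _ _
  calc ∫ X in (-1)..1, ∫ Y in (-1)..1, latticeKernel η (l * X) (l * Y)
      ≤ ∫ X in (-1)..1, 3 * π / 2 * (√(η + cos (π * (l * X)) ^ 2))⁻¹ :=
        intervalIntegral.integral_mono_on (by norm_num) (hcont.intervalIntegrable _ _)
          ((continuous_const.mul (Continuous.inv₀ (by fun_prop)
            fun X ↦ by positivity)).intervalIntegrable _ _)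
          fun X _ ↦ integral_latticeKernel_right_le hη hl _
    _ ≤ 3 * π / 2 * (3 * log (3 / √η)) := by
        rw [intervalIntegral.integral_const_mul]
        gcongr
    _ = _ := by ring

/-- The coordinate map of the plane. -/
def coords : Pt ≃ᵐ ℝ × ℝ :=
  (MeasurableEquiv.toLp 2 (Fin 2 → ℝ)).symm.trans MeasurableEquiv.finTwoArrow

lemma measurePreserving_coords : MeasurePreserving coords :=
  (volume_preserving_finTwoArrow ℝ).comp
    (EuclideanSpace.volume_preserving_symm_measurableEquiv_toLp (Fin 2))

lemma integral_B1_le_integral_square {g : ℝ × ℝ → ℝ} (hg : Continuous g) (hg₀ : ∀ p, 0 ≤ g p) :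
    ∫ x in B1, g (x 0, x 1) ≤ ∫ X in (-1)..1, ∫ Y in (-1)..1, g (X, Y) := by
  set Q : Set (ℝ × ℝ) := Set.Icc (-1) 1 ×ˢ Set.Icc (-1) 1 with hQ
  have hint : IntegrableOn g Q :=
    hg.continuousOn.integrableOn_compact (isCompact_Icc.prod isCompact_Icc)
  have hsub : B1 ⊆ coords ⁻¹' Q := fun x hx ↦
    ⟨abs_le.1 (abs_coord_lt_one_of_mem_B1 hx 0).le, abs_le.1 (abs_coord_lt_one_of_mem_B1 hx 1).le⟩
  calc ∫ x in B1, g (x 0, x 1) ≤ ∫ x in coords ⁻¹' Q, g (coords x) :=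
        setIntegral_mono_set ((measurePreserving_coords.integrableOn_comp_preimage
          coords.measurableEmbedding).2 hint) (Eventually.of_forall fun _ ↦ hg₀ _) hsub.eventuallyLE
    _ = ∫ p in Q, g p :=
        measurePreserving_coords.setIntegral_preimage_emb coords.measurableEmbedding g Q
    _ = ∫ X in Set.Icc (-1) 1, ∫ Y in Set.Icc (-1) 1, g (X, Y) := by
        rw [hQ, Measure.volume_eq_prod, setIntegral_prod _ hint]
    _ = ∫ X in (-1)..1, ∫ Y in (-1)..1, g (X, Y) := by
        simp only [intervalIntegral.integral_of_le (by norm_num : (-1 : ℝ) ≤ 1),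
          integral_Icc_eq_integral_Ioc]

lemma integral_B1_latticeKernel_le (hη : 0 < η) (hη₁ : η ≤ 1) (hl : 1 ≤ l) :
    ∫ x in B1, latticeKernel η (l * x 0) (l * x 1) ≤ 9 * π / 2 * log (3 / √η) :=
  (integral_B1_le_integral_square (continuous_latticeKernel hη l)
    fun _ ↦ latticeKernel_nonneg hη _ _).trans (integral_integral_latticeKernel_le hη hη₁ hl)

lemma log_three_div_sqrt_le {ε : ℝ} (hε : 0 < ε) (hε₉ : ε ≤ 1 / 9) : log (3 / √ε) ≤ |log ε| := by
  have hsqrt : 3 * √ε ≤ 1 := by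
    have : √ε ≤ 1 / 3 := sqrt_le_iff.2 ⟨by norm_num, by linarith⟩
    linarith
  have hle : 3 / √ε ≤ ε⁻¹ := by
    rw [div_le_iff₀ (sqrt_pos.2 hε), inv_mul_eq_div, le_div_iff₀ hε]
    calc 3 * ε = 3 * √ε * √ε := by rw [mul_assoc, mul_self_sqrt hε.le]
      _ ≤ 1 * √ε := by gcongr
      _ = √ε := one_mul _
  calc log (3 / √ε) ≤ log ε⁻¹ := log_le_log (by positivity) hle
    _ ≤ |log ε| := by
        rw [log_inv]
        exact neg_le_abs _

lemma one_le_abs_log {ε : ℝ} (hε : 0 < ε) (hε₃ : ε ≤ 1 / 3) : 1 ≤ |log ε| := by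
  have hinv : exp 1 ≤ ε⁻¹ := by
    rw [le_inv_comm₀ (exp_pos 1) hε]
    exact hε₃.trans (by rw [one_div]; exact inv_anti₀ (exp_pos 1) exp_one_lt_three.le)
  calc 1 ≤ log ε⁻¹ := (le_log_iff_exp_le (by positivity)).2 hinv
    _ ≤ |log ε| := by
        rw [log_inv]
        exact neg_le_abs _

lemma integral_B1_le_of_le_add_mul_latticeKernel {ε l a b : ℝ} (hε : 0 < ε) (hε₉ : ε ≤ 1 / 9)
    (hl : 1 ≤ l) (ha : 0 ≤ a) (hb : 0 ≤ b) {F : Pt → ℝ} (hF₀ : ∀ x, 0 ≤ F x)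
    (hF : ∀ x ∈ B1, F x ≤ a + b * latticeKernel ε (l * x 0) (l * x 1)) :
    ∫ x in B1, F x ≤ (π * a + 9 * π / 2 * b) * |log ε| := by
  have hK : IntegrableOn (fun x : Pt ↦ b * latticeKernel ε (l * x 0) (l * x 1)) B1 :=
    (integrableOn_B1_of_continuous ((continuous_latticeKernel hε l).comp
      (by fun_prop : Continuous fun x : Pt ↦ (x 0, x 1)))).integrable.const_mul b
  have ha_int : IntegrableOn (fun _ : Pt ↦ a) B1 := integrable_const a
  calc ∫ x in B1, F x ≤ ∫ x in B1, (a + b * latticeKernel ε (l * x 0) (l * x 1)) :=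
        integral_mono_of_nonneg (.of_forall hF₀) (ha_int.add hK)
          (ae_restrict_of_forall_mem measurableSet_B1 hF)
    _ = π * a + b * ∫ x in B1, latticeKernel ε (l * x 0) (l * x 1) := by
        rw [integral_add ha_int hK, setIntegral_const, volume_real_B1, smul_eq_mul,
          integral_const_mul]
    _ ≤ π * a * |log ε| + b * (9 * π / 2 * |log ε|) := by
        gcongr ?_ + b * ?_
        · exact le_mul_of_one_le_right (by positivity) (one_le_abs_log hε (by linarith))
        · refine (integral_B1_latticeKernel_le hε (by linarith) hl).trans ?_
          gcongr
          exact log_three_div_sqrt_le hε hε₉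
    _ = (π * a + 9 * π / 2 * b) * |log ε| := by ring

end KernelIntegral

section RegularizedSqrt

/-- A smooth approximation of `√(max 0 t)`, the modulus of the trial state: `regSqrt η t ^ 2` is
within `η / 2` of `max 0 t`. -/
def regSqrt (η t : ℝ) : ℝ := √((t + √(t ^ 2 + η ^ 2)) / 2)

variable {η : ℝ}

lemma abs_lt_sqrt_sq_add_sq (hη : 0 < η) (t : ℝ) : |t| < √(t ^ 2 + η ^ 2) :=
  lt_sqrt_of_sq_lt (by rw [sq_abs]; exact lt_add_of_pos_right _ (by positivity))

lemma regSqrt_radicand_pos (hη : 0 < η) (t : ℝ) : 0 < (t + √(t ^ 2 + η ^ 2)) / 2 := by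
  linarith [neg_abs_le t, abs_lt_sqrt_sq_add_sq hη t]

lemma regSqrt_sq (hη : 0 < η) (t : ℝ) : regSqrt η t ^ 2 = (t + √(t ^ 2 + η ^ 2)) / 2 :=
  sq_sqrt (regSqrt_radicand_pos hη t).le

lemma abs_regSqrt_sq_sub_le (hη : 0 < η) (t : ℝ) : |regSqrt η t ^ 2 - max 0 t| ≤ η / 2 := by
  have hlower := abs_lt_sqrt_sq_add_sq hη t
  have hupper : √(t ^ 2 + η ^ 2) ≤ |t| + η :=
    sqrt_le_iff.2 ⟨by positivity, by nlinarith [sq_abs t, abs_nonneg t]⟩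
  have hdiff : regSqrt η t ^ 2 - max 0 t = (√(t ^ 2 + η ^ 2) - |t|) / 2 := by
    rw [regSqrt_sq hη]
    rcases le_total 0 t with ht | ht
    · rw [max_eq_right ht, abs_of_nonneg ht]
      ring
    · rw [max_eq_left ht, abs_of_nonpos ht]
      ring
  rw [hdiff, abs_of_nonneg (by linarith)]
  linarith

lemma contDiff_regSqrt (hη : 0 < η) : ContDiff ℝ 1 (regSqrt η) :=
  ContDiff.sqrt ((contDiff_id.add (ContDiff.sqrt (by fun_prop) fun t ↦ by positivity)).div_const _)
    fun t ↦ (regSqrt_radicand_pos hη t).ne'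

lemma deriv_regSqrt (hη : 0 < η) (t : ℝ) :
    deriv (regSqrt η) t = regSqrt η t / (2 * √(t ^ 2 + η ^ 2)) := by
  have hr : 0 < t ^ 2 + η ^ 2 := by positivity
  have hp : 0 < regSqrt η t := sqrt_pos.2 (regSqrt_radicand_pos hη t)
  have hinner := ((hasDerivAt_pow 2 t).add_const (η ^ 2)).sqrt hr.ne'
  have hderiv : HasDerivAt (regSqrt η) _ t :=
    (((hasDerivAt_id t).add hinner).div_const 2).sqrt (regSqrt_radicand_pos hη t).ne'
  rw [hderiv.deriv]
  change _ / (2 * regSqrt η t) = _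
  have hsq := regSqrt_sq hη t
  field_simp
  rw [hsq]
  push_cast
  ring

lemma deriv_regSqrt_sq_le (hη : 0 < η) (t : ℝ) : deriv (regSqrt η) t ^ 2 ≤ 1 / (4 * η) := by
  have hη_le : η ≤ √(t ^ 2 + η ^ 2) := le_sqrt_of_sq_le (le_add_of_nonneg_left (sq_nonneg t))
  have ht := (le_abs_self t).trans (abs_lt_sqrt_sq_add_sq hη t).le
  rw [deriv_regSqrt hη, div_pow, regSqrt_sq hη]
  set r := √(t ^ 2 + η ^ 2)
  have hr : 0 < r := hη.trans_le hη_le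
  calc (t + r) / 2 / (2 * r) ^ 2 ≤ r / (2 * r) ^ 2 := by gcongr; linarith
    _ = 1 / (4 * r) := by field_simp; norm_num
    _ ≤ 1 / (4 * η) := by gcongr

end RegularizedSqrt

section TrialState

lemma vec_eq_smul_single_add (X Y : ℝ) :
    (!₂[X, Y] : Pt) = X • EuclideanSpace.single 0 1 + Y • EuclideanSpace.single 1 1 := by
  ext i
  fin_cases i <;> simp

lemma hasDerivAt_vec_left (X Y : ℝ) :
    HasDerivAt (fun X ↦ (!₂[X, Y] : Pt)) (EuclideanSpace.single 0 1) X := by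
  simp only [vec_eq_smul_single_add]
  exact (((hasDerivAt_id' X).smul_const _).add_const _).congr_deriv (one_smul _ _)

lemma hasDerivAt_vec_right (X Y : ℝ) :
    HasDerivAt (fun Y ↦ (!₂[X, Y] : Pt)) (EuclideanSpace.single 1 1) Y := by
  simp only [vec_eq_smul_single_add]
  exact (((hasDerivAt_id' Y).smul_const _).const_add _).congr_deriv (one_smul _ _)

lemma magneticGradSq_eq_covDeriv {Ω X Y : ℝ} {Ψ : Pt → ℂ} (hΨ : DifferentiableAt ℝ Ψ !₂[X, Y]) :
    magneticGradSq Ω Ψ !₂[X, Y] =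
      ‖covDeriv (-(Ω / 2) * Y) (fun X ↦ Ψ !₂[X, Y]) X‖ ^ 2
        + ‖covDeriv (Ω / 2 * X) (fun Y ↦ Ψ !₂[X, Y]) Y‖ ^ 2 := by
  have hleft : deriv (fun X ↦ Ψ !₂[X, Y]) X = pd1 Ψ !₂[X, Y] :=
    (hΨ.hasFDerivAt.comp_hasDerivAt X (hasDerivAt_vec_left X Y)).deriv
  have hright : deriv (fun Y ↦ Ψ !₂[X, Y]) Y = pd2 Ψ !₂[X, Y] :=
    (hΨ.hasFDerivAt.comp_hasDerivAt Y (hasDerivAt_vec_right X Y)).deriv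
  rw [covDeriv, covDeriv, hleft, hright]
  rfl

/-- The inverse spacing of a square lattice of `Ω₀ / (2πε)` vortices per unit area, the density
favoured by a rotation with angular velocity `Ω₀ / ε`. -/
def latticeScale (Ω₀ ε : ℝ) : ℝ := √(Ω₀ / (2 * π * ε))

/-- The vortex function of the trial state, in Landau gauge. The truncation of the series is
invisible on the disc. -/
def trialVortices (Ω₀ ε : ℝ) (x : Pt) : ℂ :=
  vortexSum ⌈latticeScale Ω₀ ε + 1⌉₊ (latticeScale Ω₀ ε * x 0) (latticeScale Ω₀ ε * x 1)

/-- The trial state bounding the ground-state energy from above: the Thomas-Fermi amplitude carrying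
a vortex lattice with cores smoothed out at scale `ε`. The exponential changes the Landau gauge of
`trialVortices` to the symmetric gauge of the angular momentum term. -/
def trialState (Ω₀ ε : ℝ) (x : Pt) : ℂ :=
  regSqrt ε (tfProfile Ω₀ x) * (Complex.exp ((-(Ω₀ / ε / 2 * (x 0 * x 1)) : ℝ) * Complex.I)
    * softPhase ε (trialVortices Ω₀ ε x))

variable {Ω₀ ε X Y : ℝ} {x : Pt}

lemma latticeScale_nonneg : 0 ≤ latticeScale Ω₀ ε := sqrt_nonneg _

lemma latticeScale_sq (hΩ₀ : 0 ≤ Ω₀) (hε : 0 ≤ ε) : latticeScale Ω₀ ε ^ 2 = Ω₀ / (2 * π * ε) :=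
  sq_sqrt (by positivity)

lemma latticeScale_sq_mul_le (hΩ₀ : 0 ≤ Ω₀) (hε : 0 < ε) :
    latticeScale Ω₀ ε ^ 2 * (8 * (4 ^ 2 + (2 * π) ^ 2)) ≤ 80 * Ω₀ / ε := by
  rw [latticeScale_sq hΩ₀ hε.le]
  have hpi : 16 + 4 * π ^ 2 ≤ 20 * π := by nlinarith [pi_gt_three, pi_lt_d2]
  calc Ω₀ / (2 * π * ε) * (8 * (4 ^ 2 + (2 * π) ^ 2))
      = 4 * Ω₀ / ε * ((16 + 4 * π ^ 2) / π) := by field_simp; ring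
    _ ≤ 4 * Ω₀ / ε * 20 := by
        gcongr
        exact (div_le_iff₀ pi_pos).2 hpi
    _ = 80 * Ω₀ / ε := by ring

lemma one_le_latticeScale (hε : 0 < ε) (h : 2 * π * ε ≤ Ω₀) : 1 ≤ latticeScale Ω₀ ε :=
  one_le_sqrt.2 ((one_le_div (by positivity)).2 h)

lemma abs_latticeScale_mul_add_one_le (hX : |X| ≤ 1) :
    |latticeScale Ω₀ ε * X| + 1 ≤ ⌈latticeScale Ω₀ ε + 1⌉₊ := by
  rw [abs_mul, abs_of_nonneg latticeScale_nonneg]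
  refine le_trans ?_ (Nat.le_ceil _)
  gcongr
  exact mul_le_of_le_one_right latticeScale_nonneg hX

lemma inv_norm_trialVortices_sq_add_le (hε : 0 < ε) (hx : x ∈ B1) :
    (‖trialVortices Ω₀ ε x‖ ^ 2 + ε)⁻¹
      ≤ 4 * latticeKernel ε (latticeScale Ω₀ ε * x 0) (latticeScale Ω₀ ε * x 1) := by
  have hlower : _ ≤ ‖trialVortices Ω₀ ε x‖ ^ 2 := le_norm_vortexSum_sq
    (abs_latticeScale_mul_add_one_le (abs_coord_lt_one_of_mem_B1 hx 0).le) _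
  rw [latticeKernel, ← inv_inv (4 : ℝ), ← mul_inv]
  exact inv_anti₀ (by positivity) (by linarith)

lemma contDiff_tfProfile : ContDiff ℝ 1 (tfProfile Ω₀) :=
  (contDiff_const.mul ((contDiff_norm_sq ℝ).sub contDiff_const)).add contDiff_const

lemma contDiff_trialVortices : ContDiff ℝ 1 (trialVortices Ω₀ ε) := by
  have hleft : ContDiff ℝ 1 fun x : Pt ↦ latticeScale Ω₀ ε * x 0 := by fun_prop
  have hright : ContDiff ℝ 1 fun x : Pt ↦ latticeScale Ω₀ ε * x 1 := by fun_prop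
  exact contDiff_vortexSum hleft hright

lemma contDiff_trialState (hε : 0 < ε) : ContDiff ℝ 1 (trialState Ω₀ ε) := by
  have hamp : ContDiff ℝ 1 fun x ↦ (regSqrt ε (tfProfile Ω₀ x) : ℂ) :=
    Complex.ofRealCLM.contDiff.comp ((contDiff_regSqrt hε).comp contDiff_tfProfile)
  have hgauge : ContDiff ℝ 1 fun x : Pt ↦ ((-(Ω₀ / ε / 2 * (x 0 * x 1)) : ℝ) : ℂ) :=
    Complex.ofRealCLM.contDiff.comp (by fun_prop : ContDiff ℝ 1
      fun x : Pt ↦ -(Ω₀ / ε / 2 * (x 0 * x 1)))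
  exact hamp.mul ((hgauge.mul contDiff_const).cexp.mul
    ((contDiff_softPhase hε).comp contDiff_trialVortices))

lemma norm_trialState_sq (x : Pt) : ‖trialState Ω₀ ε x‖ ^ 2 =
    regSqrt ε (tfProfile Ω₀ x) ^ 2 * ‖softPhase ε (trialVortices Ω₀ ε x)‖ ^ 2 := by
  simp only [trialState, norm_mul, mul_pow, Complex.norm_real, norm_eq_abs, sq_abs,
    Complex.norm_exp_ofReal_mul_I, one_mul]

lemma rhoTF_le (h : 4 / √π < Ω₀) (hx : x ∈ B1) : rhoTF Ω₀ x ≤ Ω₀ := by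
  have hΩ₀ := pos_of_hole h
  rw [rhoTF_eq_max h]
  refine max_le hΩ₀.le ?_
  have hsqrt : 1 ≤ 2 * √π := by linarith [one_le_sqrt.2 (by linarith [pi_gt_three] : 1 ≤ π)]
  calc tfProfile Ω₀ x ≤ Ω₀ / (2 * √π) := by
        have := norm_sq_lt_one_of_mem_B1 hx
        exact add_le_of_nonpos_left (mul_nonpos_of_nonneg_of_nonpos (by positivity) (by linarith))
    _ ≤ Ω₀ := div_le_self hΩ₀.le hsqrt

lemma regSqrt_tfProfile_sq_le (h : 4 / √π < Ω₀) (hε : 0 < ε) (hε₁ : ε ≤ 1) (hx : x ∈ B1) :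
    regSqrt ε (tfProfile Ω₀ x) ^ 2 ≤ Ω₀ + 1 := by
  have hTF := rhoTF_le h hx
  rw [rhoTF_eq_max h] at hTF
  linarith [(abs_le.1 (abs_regSqrt_sq_sub_le hε (tfProfile Ω₀ x))).2]

lemma norm_trialState_sq_le (h : 4 / √π < Ω₀) (hε : 0 < ε) (hε₁ : ε ≤ 1) (hx : x ∈ B1) :
    ‖trialState Ω₀ ε x‖ ^ 2 ≤ Ω₀ + 1 := by
  rw [norm_trialState_sq]
  exact (mul_le_of_le_one_right (sq_nonneg _) (norm_softPhase_sq_le_one hε _)).trans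
    (regSqrt_tfProfile_sq_le h hε hε₁ hx)

lemma abs_norm_trialState_sq_sub_rhoTF_le (h : 4 / √π < Ω₀) (hε : 0 < ε) (hε₁ : ε ≤ 1)
    (hx : x ∈ B1) : |‖trialState Ω₀ ε x‖ ^ 2 - rhoTF Ω₀ x| ≤ ε / 2 + 4 * (Ω₀ + 1) * ε
      * latticeKernel ε (latticeScale Ω₀ ε * x 0) (latticeScale Ω₀ ε * x 1) := by
  set u := ‖softPhase ε (trialVortices Ω₀ ε x)‖ ^ 2
  set a := regSqrt ε (tfProfile Ω₀ x) ^ 2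
  have hΩ₀ := pos_of_hole h
  have ha₀ : 0 ≤ a := sq_nonneg _
  have hsq : ‖trialState Ω₀ ε x‖ ^ 2 = a * u := norm_trialState_sq x
  have hcore : 1 - u = ε * (‖trialVortices Ω₀ ε x‖ ^ 2 + ε)⁻¹ :=
    one_sub_norm_softPhase_sq hε _
  have hcore₀ : 0 ≤ 1 - u := sub_nonneg.2 (norm_softPhase_sq_le_one hε _)
  calc |‖trialState Ω₀ ε x‖ ^ 2 - rhoTF Ω₀ x| = |(a - rhoTF Ω₀ x) - a * (1 - u)| := by
        rw [hsq]
        ring_nf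
    _ ≤ |a - rhoTF Ω₀ x| + |a * (1 - u)| := abs_sub _ _
    _ = |a - max 0 (tfProfile Ω₀ x)| + a * (1 - u) := by
        rw [rhoTF_eq_max h, abs_of_nonneg (mul_nonneg ha₀ hcore₀)]
    _ ≤ ε / 2 + (Ω₀ + 1) * (ε
          * (4 * latticeKernel ε (latticeScale Ω₀ ε * x 0) (latticeScale Ω₀ ε * x 1))) := by
        rw [hcore]
        gcongr
        · exact abs_regSqrt_sq_sub_le hε _
        · exact regSqrt_tfProfile_sq_le h hε hε₁ hx
        · exact inv_norm_trialVortices_sq_add_le hε hx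
    _ = _ := by ring

lemma hasDerivAt_tfProfile_left :
    HasDerivAt (fun X ↦ tfProfile Ω₀ !₂[X, Y]) (Ω₀ ^ 2 / 4 * X) X := by
  simp only [tfProfile, norm_sq_eq_coord, Matrix.cons_val_zero, Matrix.cons_val_one]
  refine (((((hasDerivAt_pow 2 X).add_const (Y ^ 2)).sub_const 1).const_mul
    (Ω₀ ^ 2 / 8)).add_const (Ω₀ / (2 * √π))).congr_deriv ?_
  push_cast
  ring

lemma hasDerivAt_tfProfile_right :
    HasDerivAt (fun Y ↦ tfProfile Ω₀ !₂[X, Y]) (Ω₀ ^ 2 / 4 * Y) Y := by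
  simp only [tfProfile, norm_sq_eq_coord, Matrix.cons_val_zero, Matrix.cons_val_one]
  refine (((((hasDerivAt_pow 2 Y).const_add (X ^ 2)).sub_const 1).const_mul
    (Ω₀ ^ 2 / 8)).add_const (Ω₀ / (2 * √π))).congr_deriv ?_
  push_cast
  ring

lemma norm_covDeriv_trialState_left_sq_le (hε : 0 < ε) (hX : |X| ≤ 1) :
    ‖covDeriv (-(Ω₀ / ε / 2) * Y) (fun X ↦ trialState Ω₀ ε !₂[X, Y]) X‖ ^ 2 ≤
      2 * (deriv (regSqrt ε) (tfProfile Ω₀ !₂[X, Y]) * (Ω₀ ^ 2 / 4 * X)) ^ 2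
        + 8 * regSqrt ε (tfProfile Ω₀ !₂[X, Y]) ^ 2 * latticeScale Ω₀ ε ^ 2 * 4 ^ 2
          / (‖trialVortices Ω₀ ε !₂[X, Y]‖ ^ 2 + ε) := by
  have hphase : HasDerivAt (fun X ↦ -(Ω₀ / ε / 2 * (X * Y))) (-(Ω₀ / ε / 2) * Y) X :=
    (((hasDerivAt_id' X).mul_const Y).const_mul (Ω₀ / ε / 2)).fun_neg.congr_deriv (by ring)
  have hamp : HasDerivAt (fun X ↦ regSqrt ε (tfProfile Ω₀ !₂[X, Y]))
      (deriv (regSqrt ε) (tfProfile Ω₀ !₂[X, Y]) * (Ω₀ ^ 2 / 4 * X)) X :=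
    ((contDiff_regSqrt hε).differentiable one_ne_zero _).hasDerivAt.comp X
      hasDerivAt_tfProfile_left
  have hvortices : Differentiable ℝ fun s ↦
      vortexSum ⌈latticeScale Ω₀ ε + 1⌉₊ s (latticeScale Ω₀ ε * Y) :=
    (contDiff_vortexSum contDiff_id contDiff_const).differentiable one_ne_zero
  refine (norm_covDeriv_mul_exp_mul_softPhase_sq_le hε hamp hphase
    (hvortices (latticeScale Ω₀ ε * X)) (β := 0) (by ring)).trans ?_
  have hD := norm_covDeriv_vortexSum_left_le
    (abs_latticeScale_mul_add_one_le (Ω₀ := Ω₀) (ε := ε) hX) (latticeScale Ω₀ ε * Y)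
  gcongr
  rfl

lemma norm_covDeriv_trialState_right_sq_le (hΩ₀ : 0 < Ω₀) (hε : 0 < ε) (hX : |X| ≤ 1) :
    ‖covDeriv (Ω₀ / ε / 2 * X) (fun Y ↦ trialState Ω₀ ε !₂[X, Y]) Y‖ ^ 2 ≤
      2 * (deriv (regSqrt ε) (tfProfile Ω₀ !₂[X, Y]) * (Ω₀ ^ 2 / 4 * Y)) ^ 2
        + 8 * regSqrt ε (tfProfile Ω₀ !₂[X, Y]) ^ 2 * latticeScale Ω₀ ε ^ 2 * (2 * π) ^ 2
          / (‖trialVortices Ω₀ ε !₂[X, Y]‖ ^ 2 + ε) := by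
  have hphase : HasDerivAt (fun Y ↦ -(Ω₀ / ε / 2 * (X * Y))) (-(Ω₀ / ε / 2) * X) Y :=
    (((hasDerivAt_id' Y).const_mul X).const_mul (Ω₀ / ε / 2)).fun_neg.congr_deriv (by ring)
  have hamp : HasDerivAt (fun Y ↦ regSqrt ε (tfProfile Ω₀ !₂[X, Y]))
      (deriv (regSqrt ε) (tfProfile Ω₀ !₂[X, Y]) * (Ω₀ ^ 2 / 4 * Y)) Y :=
    ((contDiff_regSqrt hε).differentiable one_ne_zero _).hasDerivAt.comp Y
      hasDerivAt_tfProfile_right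
  have hvortices : Differentiable ℝ fun t ↦
      vortexSum ⌈latticeScale Ω₀ ε + 1⌉₊ (latticeScale Ω₀ ε * X) t :=
    (contDiff_vortexSum contDiff_const contDiff_id).differentiable one_ne_zero
  have hgauge : Ω₀ / ε / 2 * X - -(Ω₀ / ε / 2) * X =
      latticeScale Ω₀ ε * (2 * π * (latticeScale Ω₀ ε * X)) := by
    have hscale := latticeScale_sq hΩ₀.le hε.le
    calc Ω₀ / ε / 2 * X - -(Ω₀ / ε / 2) * X = 2 * π * (Ω₀ / (2 * π * ε)) * X := by field_simp; ring
      _ = _ := by rw [← hscale]; ring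
  refine (norm_covDeriv_mul_exp_mul_softPhase_sq_le hε hamp hphase
    (hvortices (latticeScale Ω₀ ε * Y)) hgauge).trans ?_
  have hD := norm_covDeriv_vortexSum_right_le
    (abs_latticeScale_mul_add_one_le (Ω₀ := Ω₀) (ε := ε) hX) (latticeScale Ω₀ ε * Y)
  gcongr
  rfl

lemma magneticGradSq_trialState_le (h : 4 / √π < Ω₀) (hε : 0 < ε) (hε₁ : ε ≤ 1) (hx : x ∈ B1) :
    magneticGradSq (Ω₀ / ε) (trialState Ω₀ ε) x ≤ Ω₀ ^ 4 / (32 * ε) + 320 * Ω₀ * (Ω₀ + 1) / ε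
      * latticeKernel ε (latticeScale Ω₀ ε * x 0) (latticeScale Ω₀ ε * x 1) := by
  have hΩ₀ := pos_of_hole h
  have hX := (abs_coord_lt_one_of_mem_B1 hx 0).le
  have hnorm := norm_sq_lt_one_of_mem_B1 hx
  rw [norm_sq_eq_coord] at hnorm
  have hcore := inv_norm_trialVortices_sq_add_le (Ω₀ := Ω₀) hε hx
  have hamp := regSqrt_tfProfile_sq_le h hε hε₁ hx
  have hderiv := deriv_regSqrt_sq_le hε (tfProfile Ω₀ x)
  have hx_eq : x = !₂[x 0, x 1] := by ext i; fin_cases i <;> rfl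
  set K := latticeKernel ε (latticeScale Ω₀ ε * x 0) (latticeScale Ω₀ ε * x 1)
  set D := deriv (regSqrt ε) (tfProfile Ω₀ x)
  set a := regSqrt ε (tfProfile Ω₀ x)
  have hsum : magneticGradSq (Ω₀ / ε) (trialState Ω₀ ε) x ≤
      D ^ 2 * (Ω₀ ^ 4 / 8 * (x 0 ^ 2 + x 1 ^ 2))
        + a ^ 2 * (latticeScale Ω₀ ε ^ 2 * (8 * (4 ^ 2 + (2 * π) ^ 2)))
          * (‖trialVortices Ω₀ ε x‖ ^ 2 + ε)⁻¹ := by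
    have hleft := norm_covDeriv_trialState_left_sq_le (Ω₀ := Ω₀) (Y := x 1) hε hX
    have hright := norm_covDeriv_trialState_right_sq_le (Y := x 1) hΩ₀ hε hX
    have hsplit := magneticGradSq_eq_covDeriv (Ω := Ω₀ / ε) (X := x 0) (Y := x 1)
      ((contDiff_trialState (Ω₀ := Ω₀) hε).differentiable one_ne_zero _)
    rw [← hx_eq] at hleft hright hsplit
    rw [hsplit]
    refine (add_le_add hleft hright).trans_eq ?_
    ring
  have hscale := latticeScale_sq_mul_le hΩ₀.le hε
  calc magneticGradSq (Ω₀ / ε) (trialState Ω₀ ε) x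
      ≤ 1 / (4 * ε) * (Ω₀ ^ 4 / 8 * 1) + (Ω₀ + 1) * (80 * Ω₀ / ε) * (4 * K) := by
        refine hsum.trans ?_
        gcongr
    _ = _ := by
        field_simp
        ring

end TrialState

section EnergyBound

variable {Ω₀ ε : ℝ}

lemma one_le_latticeScale_of_hole (h : 4 / √π < Ω₀) (hε : 0 < ε) (hε₉ : ε ≤ 1 / 9) :
    1 ≤ latticeScale Ω₀ ε := by
  have hsqrt : √π ≤ 2 := sqrt_le_iff.2 ⟨by norm_num, by linarith [pi_lt_four]⟩
  have hΩ₀ : 2 < Ω₀ := by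
    refine lt_of_le_of_lt ?_ h
    rw [le_div_iff₀ (by positivity)]
    linarith
  refine one_le_latticeScale hε ?_
  calc 2 * π * ε ≤ 2 * 4 * (1 / 9) := by gcongr; exact pi_lt_four.le
    _ ≤ Ω₀ := by linarith

lemma integral_abs_norm_trialState_sq_sub_rhoTF_le (h : 4 / √π < Ω₀) (hε : 0 < ε)
    (hε₉ : ε ≤ 1 / 9) : ∫ x in B1, |‖trialState Ω₀ ε x‖ ^ 2 - rhoTF Ω₀ x| ≤
      (π / 2 + 18 * π * (Ω₀ + 1)) * ε * |log ε| := by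
  have hΩ₀ := pos_of_hole h
  refine (integral_B1_le_of_le_add_mul_latticeKernel hε hε₉ (one_le_latticeScale_of_hole h hε hε₉)
    (by positivity) (by positivity) (fun x ↦ abs_nonneg _)
    fun x hx ↦ abs_norm_trialState_sq_sub_rhoTF_le h hε (by linarith) hx).trans_eq ?_
  ring

lemma sq_mul_integral_magneticGradSq_trialState_le (h : 4 / √π < Ω₀) (hε : 0 < ε)
    (hε₉ : ε ≤ 1 / 9) : ε ^ 2 * ∫ x in B1, magneticGradSq (Ω₀ / ε) (trialState Ω₀ ε) x ≤
      (π * Ω₀ ^ 4 / 32 + 1440 * π * Ω₀ * (Ω₀ + 1)) * ε * |log ε| := by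
  have hΩ₀ := pos_of_hole h
  have hint := integral_B1_le_of_le_add_mul_latticeKernel hε hε₉
    (one_le_latticeScale_of_hole h hε hε₉) (by positivity) (by positivity)
    (magneticGradSq_nonneg (Ω₀ / ε) _)
    fun x hx ↦ magneticGradSq_trialState_le h hε (by linarith) hx
  refine (mul_le_mul_of_nonneg_left hint (sq_nonneg ε)).trans_eq ?_
  field_simp
  ring

lemma tendsto_mul_abs_log_nhdsGT_zero : Tendsto (fun ε ↦ ε * |log ε|) (𝓝[>] 0) (𝓝 0) := by
  have := (tendsto_log_mul_rpow_nhdsGT_zero one_pos).abs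
  rw [abs_zero] at this
  refine this.congr' ?_
  filter_upwards [self_mem_nhdsWithin] with ε hε
  rw [rpow_one, abs_mul, abs_of_pos (Set.mem_Ioi.1 hε), mul_comm]

lemma half_le_integral_norm_trialState_sq (h : 4 / √π < Ω₀) (hε : 0 < ε) (hε₉ : ε ≤ 1 / 9)
    (hsmall : (π / 2 + 18 * π * (Ω₀ + 1)) * ε * |log ε| ≤ 1 / 2) :
    1 / 2 ≤ ∫ x in B1, ‖trialState Ω₀ ε x‖ ^ 2 := by
  have hmass := (abs_one_sub_integral_le (f := fun x ↦ ‖trialState Ω₀ ε x‖ ^ 2)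
    (integrableOn_B1_of_continuous ((contDiff_trialState hε).continuous.norm.pow 2))
    (integrableOn_B1_of_continuous (continuous_rhoTF h)) (integral_rhoTF h)).trans
    (integral_abs_norm_trialState_sq_sub_rhoTF_le h hε hε₉)
  linarith [(abs_le.1 (hmass.trans hsmall)).2]

lemma exists_gpAdm_sq_mul_gpEnergy_le (h : 4 / √π < Ω₀) : ∃ C : ℝ, ∀ᶠ ε in 𝓝[>] 0,
    ∃ Φ, gpAdm Φ ∧
      ε ^ 2 * gpEnergy ε (Ω₀ / ε) Φ ≤ tfEnergy Ω₀ (rhoTF Ω₀) + C * ε * |log ε| := by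
  set c₁ := π / 2 + 18 * π * (Ω₀ + 1)
  set c₂ := π * Ω₀ ^ 4 / 32 + 1440 * π * Ω₀ * (Ω₀ + 1)
  have hsmall : ∀ᶠ ε in 𝓝[>] (0 : ℝ), c₁ * ε * |log ε| ≤ 1 / 2 := by
    have := tendsto_mul_abs_log_nhdsGT_zero.const_mul c₁
    rw [mul_zero] at this
    simpa only [mul_assoc] using this.eventually_le_const one_half_pos
  refine ⟨2 * c₂ + (4 * (Ω₀ + 1) + Ω₀ ^ 2 / 4) * (2 * c₁), ?_⟩
  filter_upwards [hsmall, Ioc_mem_nhdsGT (by norm_num : (0 : ℝ) < 1 / 9)] with ε hsmall ⟨hε, hε₉⟩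
  have hΩ₀ := pos_of_hole h
  have hsmooth : ContDiff ℝ 1 (trialState Ω₀ ε) := contDiff_trialState hε
  have hmass := half_le_integral_norm_trialState_sq h hε hε₉ hsmall
  refine ⟨massNormalized (trialState Ω₀ ε), gpAdm_massNormalized hsmooth (by linarith), ?_⟩
  calc _ ≤ _ := sq_mul_gpEnergy_massNormalized_le h hε.ne' hsmooth
        (fun x hx ↦ norm_trialState_sq_le h hε (by linarith) hx)
        (fun x hx ↦ (rhoTF_le h hx).trans (by linarith)) hmass
    _ ≤ tfEnergy Ω₀ (rhoTF Ω₀) + 2 * (c₂ * ε * |log ε|)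
          + (4 * (Ω₀ + 1) + Ω₀ ^ 2 / 4) * (2 * (c₁ * ε * |log ε|)) := by
        gcongr _ + 2 * ?_ + _ * (2 * ?_)
        · exact sq_mul_integral_magneticGradSq_trialState_le h hε hε₉
        · exact integral_abs_norm_trialState_sq_sub_rhoTF_le h hε hε₉
    _ = _ := by ring

end EnergyBound

theorem stmt10 (Ω₀ : ℝ) (h : 4 / Real.sqrt π < Ω₀) :
    ∃ (C ε₀ : ℝ), 0 < ε₀ ∧ ∀ ε : ℝ, 0 < ε → ε < ε₀ →
      ∀ Ψ : Pt → ℂ, IsGPMinimizer ε (Ω₀ / ε) Ψ →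
        (∫ x in Metric.ball (0 : Pt) (R0 Ω₀), ‖Ψ x‖ ^ 4) ≤ C * ε * |Real.log ε| := by
  obtain ⟨C, hC⟩ := exists_gpAdm_sq_mul_gpEnergy_le h
  obtain ⟨ε₀, hε₀, hC⟩ := mem_nhdsGT_iff_exists_Ioo_subset.1 hC
  refine ⟨C, ε₀, hε₀, fun ε hε hε_lt Ψ hΨ ↦ ?_⟩
  obtain ⟨Φ, hΦ, hΦ_le⟩ := hC ⟨hε, hε_lt⟩
  calc ∫ x in Metric.ball (0 : Pt) (R0 Ω₀), ‖Ψ x‖ ^ 4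
      ≤ ε ^ 2 * gpEnergy ε (Ω₀ / ε) Ψ - tfEnergy Ω₀ (rhoTF Ω₀) :=
        integral_hole_norm_pow_four_le h hε.ne' hΨ.1
    _ ≤ ε ^ 2 * gpEnergy ε (Ω₀ / ε) Φ - tfEnergy Ω₀ (rhoTF Ω₀) := by
        gcongr
        exact hΨ.gpEnergy_le hΦ
    _ ≤ C * ε * |Real.log ε| := sub_le_iff_le_add'.2 hΦ_le
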